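/- arXiv:2309.12962 — 7 statements merged into one kernel-verified Lean document; each statement's English description precedes it below -/
import Mathlib

section
/- Let X be a Lorentzian pre-length space that is locally causally closed and sufficiently causally connected, let T : X → ℝ be a locally anti-Lipschitz time function, and suppose the background metric of X is the null distance d_T of T and that (X, d_T) is a complete metric space. Assume X has τ-midpoints, and assume there exists c ∈ (0, 1/2] such that for every pair p ≪ q there is a τ-midpoint m of p and q with (1−c)·T(p) + c·T(q) ≤ T(m) ≤ c·T(p) + (1−c)·T(q). Then X is causally geodesic: for every x ≪ y there is a future-directed causal curve γ from x to y with L_τ(γ) = τ(x,y), and for every x < y with ¬(x ≪ y) there is a future-directed causal curve from x to y. -/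
open scoped ENNReal

/-- A Lorentzian pre-length space: a metric space together with a timelike relation `≪`,
a causal relation `≤`, and a lower semicontinuous time separation function
`τ : X × X → [0,∞]` satisfying the reverse triangle inequality. -/
structure LorentzianPreLengthSpace (X : Type*) [MetricSpace X] where
  timelike : X → X → Prop
  causal : X → X → Prop
  causal_refl : ∀ x, causal x x
  causal_trans : ∀ {x y z}, causal x y → causal y z → causal x z
  timelike_trans : ∀ {x y z}, timelike x y → timelike y z → timelike x z
  timelike_causal : ∀ {x y}, timelike x y → causal x y
  tau : X → X → ℝ≥0∞
  tau_lsc : LowerSemicontinuous fun p : X × X => tau p.1 p.2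
  tau_rev_triangle : ∀ {x y z}, causal x y → causal y z → tau x y + tau y z ≤ tau x z
  tau_eq_zero_of_not_causal : ∀ {x y}, ¬causal x y → tau x y = 0
  tau_pos_iff_timelike : ∀ {x y}, 0 < tau x y ↔ timelike x y

namespace LorentzianPreLengthSpace

variable {X : Type*} [MetricSpace X] (L : LorentzianPreLengthSpace X)

/-- The strict causal relation `x < y`. -/
def CausallyLt (x y : X) : Prop := L.causal x y ∧ x ≠ y

/-- A future-directed causal curve: a non-constant continuous map `γ : [a,b] → X`
with `γ s ≤ γ t` for `a ≤ s < t ≤ b`. -/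
def IsFutureCausalCurve (γ : ℝ → X) (a b : ℝ) : Prop :=
  a < b ∧ ContinuousOn γ (Set.Icc a b) ∧
    (∃ s ∈ Set.Icc a b, ∃ t ∈ Set.Icc a b, γ s ≠ γ t) ∧
    ∀ ⦃s t : ℝ⦄, a ≤ s → s < t → t ≤ b → L.causal (γ s) (γ t)

/-- A future-directed timelike curve. -/
def IsFutureTimelikeCurve (γ : ℝ → X) (a b : ℝ) : Prop :=
  a < b ∧ ContinuousOn γ (Set.Icc a b) ∧
    (∃ s ∈ Set.Icc a b, ∃ t ∈ Set.Icc a b, γ s ≠ γ t) ∧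
    ∀ ⦃s t : ℝ⦄, a ≤ s → s < t → t ≤ b → L.timelike (γ s) (γ t)

/-- The τ-length of a curve `γ : [a,b] → X`: the infimum over all partitions
`a = t 0 < t 1 < ⋯ < t N = b` of `∑ τ(γ(t i), γ(t (i+1)))`. -/
noncomputable def tauLength (γ : ℝ → X) (a b : ℝ) : ℝ≥0∞ :=
  ⨅ (N : ℕ) (t : Fin (N + 1) → ℝ) (_ : StrictMono t) (_ : t 0 = a)
      (_ : t (Fin.last N) = b),
    ∑ i : Fin N, L.tau (γ (t i.castSucc)) (γ (t i.succ))

/-- A distance realizer from `x` to `y`: a future-directed causal curve from `x` to `y`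
whose τ-length equals `τ(x,y)`. -/
def IsDistanceRealizer (γ : ℝ → X) (a b : ℝ) (x y : X) : Prop :=
  L.IsFutureCausalCurve γ a b ∧ γ a = x ∧ γ b = y ∧ L.tauLength γ a b = L.tau x y

/-- Causal path-connectedness: timelike related points are joined by timelike curves and
strictly causally related points by causal curves. -/
def CausallyPathConnected : Prop :=
  (∀ x y : X, L.timelike x y →
      ∃ (γ : ℝ → X) (a b : ℝ), L.IsFutureTimelikeCurve γ a b ∧ γ a = x ∧ γ b = y) ∧
    ∀ x y : X, L.CausallyLt x y →
      ∃ (γ : ℝ → X) (a b : ℝ), L.IsFutureCausalCurve γ a b ∧ γ a = x ∧ γ b = y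

/-- Sufficiently causally connected: path-connected, causally path-connected, and every
point lies on a timelike curve. -/
def SufficientlyCausallyConnected : Prop :=
  IsPathConnected (Set.univ : Set X) ∧ L.CausallyPathConnected ∧
    ∀ x : X, ∃ (γ : ℝ → X) (a b : ℝ),
      L.IsFutureTimelikeCurve γ a b ∧ ∃ s ∈ Set.Icc a b, γ s = x

/-- Locally causally closed: every point has a neighbourhood `U` on which the causal
relation is closed in the limit sense. -/
def LocallyCausallyClosed : Prop :=
  ∀ x : X, ∃ U ∈ nhds x, ∀ (p q : X) (pn qn : ℕ → X),
    (∀ n, pn n ∈ U) → (∀ n, qn n ∈ U) → p ∈ closure U → q ∈ closure U →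
    Filter.Tendsto pn Filter.atTop (nhds p) → Filter.Tendsto qn Filter.atTop (nhds q) →
    (∀ n, L.causal (pn n) (qn n)) → L.causal p q

/-- A time function: continuous and strictly increasing along the strict causal relation. -/
def IsTimeFunction (T : X → ℝ) : Prop :=
  Continuous T ∧ ∀ x y : X, L.CausallyLt x y → T x < T y

/-- A locally anti-Lipschitz function: every point has a neighbourhood `U` carrying a
metric `dU` such that `T q - T p ≤ dU p q` for causally related `p ≤ q` in `U`. -/
def IsLocallyAntiLipschitz (T : X → ℝ) : Prop :=
  ∀ x : X, ∃ U ∈ nhds x, ∃ dU : X → X → ℝ,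
    (∀ p ∈ U, ∀ q ∈ U, 0 ≤ dU p q) ∧
    (∀ p ∈ U, ∀ q ∈ U, (dU p q = 0 ↔ p = q)) ∧
    (∀ p ∈ U, ∀ q ∈ U, dU p q = dU q p) ∧
    (∀ p ∈ U, ∀ q ∈ U, ∀ r ∈ U, dU p r ≤ dU p q + dU q r) ∧
    ∀ p ∈ U, ∀ q ∈ U, L.causal p q → T q - T p ≤ dU p q

/-- The set of null lengths of piecewise causal curves from `p` to `q` with respect to a
(generalized) time function `T`: for each partitioned curve whose pieces are future- or
past-directed causal, the value `∑ |T(γ(t (i+1))) - T(γ(t i))|`. -/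
def nullLengths (T : X → ℝ) (p q : X) : Set ℝ :=
  { l | ∃ (γ : ℝ → X) (a b : ℝ) (N : ℕ) (t : Fin (N + 1) → ℝ),
      ContinuousOn γ (Set.Icc a b) ∧ StrictMono t ∧ t 0 = a ∧ t (Fin.last N) = b ∧
      (∀ i : Fin N,
        (∀ ⦃u v : ℝ⦄, t i.castSucc ≤ u → u < v → v ≤ t i.succ → L.causal (γ u) (γ v)) ∨
        (∀ ⦃u v : ℝ⦄, t i.castSucc ≤ u → u < v → v ≤ t i.succ → L.causal (γ v) (γ u))) ∧
      γ a = p ∧ γ b = q ∧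
      l = ∑ i : Fin N, |T (γ (t i.succ)) - T (γ (t i.castSucc))| }

/-- The null distance of Sormani–Vega with respect to `T`. -/
noncomputable def nullDist (T : X → ℝ) (p q : X) : ℝ := sInf (L.nullLengths T p q)

/-- `y` is a τ-midpoint of `x` and `z`. -/
def IsTauMidpoint (x y z : X) : Prop :=
  L.tau x y = L.tau x z / 2 ∧ L.tau y z = L.tau x z / 2

/-- `X` has τ-midpoints. -/
def HasTauMidpoints : Prop :=
  ∀ x z : X, L.timelike x z → ∃ y : X, L.IsTauMidpoint x y z

/-- `y` is an ε-τ-midpoint of `x` and `z`: both `τ(x,y)` and `τ(y,z)` differ from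
`τ(x,z)/2` by less than `ε` (the inequalities `a < b + ε ∧ b < a + ε` encode
`|a - b| < ε` in `[0,∞]`). -/
def IsEpsTauMidpoint (ε : ℝ≥0∞) (x y z : X) : Prop :=
  L.tau x z / 2 < L.tau x y + ε ∧ L.tau x y < L.tau x z / 2 + ε ∧
    L.tau x z / 2 < L.tau y z + ε ∧ L.tau y z < L.tau x z / 2 + ε

/-- `X` has approximate τ-midpoints. -/
def HasApproxTauMidpoints : Prop :=
  ∀ x z : X, L.timelike x z → ∀ ε : ℝ≥0∞, 0 < ε → ∃ y : X, L.IsEpsTauMidpoint ε x y z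

/-- `X` is intrinsic: `τ(x,y)` is the supremum of τ-lengths of future-directed causal
curves from `x` to `y` (with `sup ∅ = 0`). -/
def IsIntrinsic : Prop :=
  ∀ x y : X, L.tau x y =
    ⨆ (γ : ℝ → X) (a : ℝ) (b : ℝ) (_ : L.IsFutureCausalCurve γ a b)
      (_ : γ a = x) (_ : γ b = y), L.tauLength γ a b

/-- `X` is causally geodesic: every timelike related pair is joined by a distance
realizer, and every strictly causally but not timelike related pair is joined by a
future-directed causal curve. -/
def IsCausallyGeodesic : Prop :=
  (∀ x y : X, L.timelike x y →
      ∃ (γ : ℝ → X) (a b : ℝ), L.IsDistanceRealizer γ a b x y) ∧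
    ∀ x y : X, L.CausallyLt x y → ¬L.timelike x y →
      ∃ (γ : ℝ → X) (a b : ℝ), L.IsFutureCausalCurve γ a b ∧ γ a = x ∧ γ b = y

end LorentzianPreLengthSpace

namespace TauMid

open LorentzianPreLengthSpace Filter Topology

/-- Iterated midpoints. -/
noncomputable def it {X : Type*} (m : X → X → X) (x y : X) : ℕ → ℕ → X
  | 0, k => if k = 0 then x else y
  | n + 1, k => if k % 2 = 0 then it m x y n (k / 2)
      else m (it m x y n (k / 2)) (it m x y n (k / 2 + 1))

lemma it_even {X : Type*} (m : X → X → X) (x y : X) (n k : ℕ) :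
    it m x y (n + 1) (2 * k) = it m x y n k := by
  have h1 : (2 * k) % 2 = 0 := by omega
  have h2 : (2 * k) / 2 = k := by omega
  rw [it, if_pos h1, h2]

lemma it_odd {X : Type*} (m : X → X → X) (x y : X) (n k : ℕ) :
    it m x y (n + 1) (2 * k + 1) = m (it m x y n k) (it m x y n (k + 1)) := by
  have h1 : ¬ (2 * k + 1) % 2 = 0 := by omega
  have h2 : (2 * k + 1) / 2 = k := by omega
  rw [it, if_neg h1, h2]

lemma it_pow {X : Type*} (m : X → X → X) (x y : X) (n j k : ℕ) :
    it m x y (n + j) (2 ^ j * k) = it m x y n k := by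
  induction j with
  | zero => simp
  | succ j ih =>
    rw [← ih, ← it_even m x y (n + j) (2 ^ j * k), ← add_assoc, pow_succ']
    congr 1
    ring

lemma it_ge {X : Type*} (m : X → X → X) (x y : X) (hm : m y y = y) (n k : ℕ) (hk : 2 ^ n ≤ k) :
    it m x y n k = y := by
  induction n generalizing k with
  | zero => simp at hk; rw [it, if_neg (by omega)]
  | succ n ih =>
    rw [pow_succ] at hk
    obtain ⟨j, rfl | rfl⟩ := Nat.even_or_odd' k
    · rw [it_even, ih _ (by omega)]
    · rw [it_odd, ih _ (by omega), ih _ (by omega), hm]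

variable {X : Type*} [MetricSpace X]

lemma dist_le (L : LorentzianPreLengthSpace X) (T : X → ℝ) (h_cpc : L.CausallyPathConnected)
    (hT : L.IsTimeFunction T) (h_bg : ∀ p q : X, dist p q = L.nullDist T p q) (p q : X)
    (h : L.causal p q) : dist p q ≤ T q - T p := by
  by_cases hpq : p = q
  · subst hpq; simp
  obtain ⟨γ, a, b, ⟨hab, hc, -, hm⟩, rfl, rfl⟩ := h_cpc.2 p q ⟨h, hpq⟩
  have hlt := hT.2 _ _ ⟨h, hpq⟩
  rw [h_bg]
  apply csInf_le
  · refine ⟨0, ?_⟩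
    rintro l ⟨γ', a', b', N, t, -, -, -, -, -, -, -, rfl⟩
    exact Finset.sum_nonneg fun i _ => abs_nonneg _
  · refine ⟨γ, a, b, 1, ![a, b], hc, ?_, rfl, rfl, ?_, rfl, rfl, ?_⟩
    · intro i j hij
      fin_cases i <;> fin_cases j <;> simp_all
    · intro i
      left
      intro u v hu huv hv
      fin_cases i
      exact hm (by simpa using hu) huv (by simpa using hv)
    · simp [abs_of_pos (sub_pos.2 hlt)]

lemma causal_of_local (L : LorentzianPreLengthSpace X) (γ : ℝ → X)
    (h : ∀ r : ℝ, ∃ V ∈ 𝓝 r, ∀ u ∈ V, ∀ v ∈ V, u ≤ v → L.causal (γ u) (γ v))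
    (s t : ℝ) (hst : s ≤ t) : L.causal (γ s) (γ t) := by
  choose V hV hc using h
  obtain ⟨δ, hδ, hL⟩ := lebesgue_number_lemma_of_metric (s := Set.Icc s t)
    (c := fun r => interior (V r)) isCompact_Icc (fun _ => isOpen_interior)
    (fun r _ => Set.mem_iUnion.2 ⟨r, mem_interior_iff_mem_nhds.2 (hV r)⟩)
  have key : ∀ n : ℕ, ∀ u ∈ Set.Icc s t, u ≤ s + n * (δ / 2) → L.causal (γ s) (γ u) := by
    intro n
    induction n with
    | zero =>
      intro u hu h
      have : u = s := le_antisymm (by simpa using h) hu.1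
      rw [this]; exact L.causal_refl _
    | succ n ih =>
      intro u hu h
      push_cast at h
      by_cases h2 : u ≤ s + δ / 2
      · obtain ⟨r, hr⟩ := hL s ⟨le_rfl, hst⟩
        refine hc r s (interior_subset (hr ?_)) u (interior_subset (hr ?_)) hu.1
        · simp [hδ]
        · rw [Metric.mem_ball, Real.dist_eq, abs_lt]; constructor <;> linarith [hu.1]
      · have h3 : u - δ / 2 ∈ Set.Icc s t := ⟨by linarith, by linarith [hu.2]⟩
        refine L.causal_trans (ih (u - δ / 2) h3 (by linarith)) ?_
        obtain ⟨r, hr⟩ := hL u hu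
        refine hc r _ (interior_subset (hr ?_)) u (interior_subset (hr ?_)) (by linarith)
        · rw [Metric.mem_ball, Real.dist_eq, abs_lt]; constructor <;> linarith
        · simp [hδ]
  obtain ⟨n, hn⟩ := exists_nat_gt ((t - s) / (δ / 2))
  rw [div_lt_iff₀ (by linarith)] at hn
  exact key n t ⟨hst, le_rfl⟩ (by linarith)

lemma floor_double (n : ℕ) (t : ℝ) :
    ⌊2 ^ (n + 1) * t⌋₊ = 2 * ⌊2 ^ n * t⌋₊ ∨ ⌊2 ^ (n + 1) * t⌋₊ = 2 * ⌊2 ^ n * t⌋₊ + 1 := by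
  rcases le_or_gt 0 t with ht | ht
  · have h0 : 0 ≤ 2 ^ n * t := by positivity
    have h1 := Nat.floor_le h0
    have h2 := Nat.lt_floor_add_one (2 ^ n * t)
    have e : (2 : ℝ) ^ (n + 1) * t = 2 * (2 ^ n * t) := by ring
    rw [e]
    have h3 : 2 * ⌊2 ^ n * t⌋₊ ≤ ⌊2 * (2 ^ n * t)⌋₊ := by
      apply Nat.le_floor; push_cast; linarith
    have h4 : ⌊2 * (2 ^ n * t)⌋₊ < 2 * ⌊2 ^ n * t⌋₊ + 2 := by
      rw [Nat.floor_lt (by positivity)]; push_cast; linarith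
    omega
  · left
    rw [Nat.floor_of_nonpos (mul_nonpos_of_nonneg_of_nonpos (by positivity) ht.le),
      Nat.floor_of_nonpos (mul_nonpos_of_nonneg_of_nonpos (by positivity) ht.le)]

lemma main_curve [CompleteSpace X]
    (L : LorentzianPreLengthSpace X) (T : X → ℝ)
    (h_lcc : L.LocallyCausallyClosed)
    (hd : ∀ p q : X, L.causal p q → dist p q ≤ T q - T p)
    (hirr : ∀ x, ¬ L.timelike x x)
    (hmono : ∀ p q, L.causal p q → T p ≤ T q)
    (c : ℝ) (hc0 : 0 < c) (hc2 : c ≤ 1 / 2)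
    (h_comp : ∀ p q : X, L.timelike p q → ∃ m : X, L.IsTauMidpoint p m q ∧
      (1 - c) * T p + c * T q ≤ T m ∧ T m ≤ c * T p + (1 - c) * T q)
    (x y : X) (hxy : L.timelike x y) :
    ∃ γ : ℝ → X, Continuous γ ∧ γ 0 = x ∧ γ 1 = y ∧
      (∀ s t, s ≤ t → L.causal (γ s) (γ t)) ∧
      ∀ s t, 0 ≤ s → s < t → t ≤ 1 →
        ENNReal.ofReal (t - s) * L.tau x y ≤ L.tau (γ s) (γ t) := by
  classical
  have hm' : ∀ p q : X, ∃ m : X, (L.timelike p q → L.IsTauMidpoint p m q ∧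
      (1 - c) * T p + c * T q ≤ T m ∧ T m ≤ c * T p + (1 - c) * T q) ∧ (p = q → m = p) := by
    intro p q
    by_cases h : L.timelike p q
    · obtain ⟨m, hm⟩ := h_comp p q h
      exact ⟨m, fun _ => hm, fun e => absurd (e ▸ h) (hirr p)⟩
    · exact ⟨p, fun h' => absurd h' h, fun _ => rfl⟩
  choose m hm hmm using hm'
  have hmyy : ∀ y, m y y = y := fun y => hmm y y rfl
  set f := it m x y with hf
  have hf_even : ∀ n k, f (n + 1) (2 * k) = f n k := it_even m x y
  have hf_odd : ∀ n k, f (n + 1) (2 * k + 1) = m (f n k) (f n (k + 1)) := it_odd m x y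
  have hf_pow : ∀ n j k, f (n + j) (2 ^ j * k) = f n k := it_pow m x y
  have hf_ge : ∀ n k, 2 ^ n ≤ k → f n k = y := it_ge m x y (hmyy y)
  have hf00 : f 0 0 = x := by simp [hf, it]
  have hf01 : f 0 1 = y := by simp [hf, it]
  clear_value f
  have hτ0 : 0 < L.tau x y := L.tau_pos_iff_timelike.2 hxy
  -- tau along the dyadic points
  have hτ : ∀ n k, k < 2 ^ n → L.tau (f n k) (f n (k + 1)) = L.tau x y / 2 ^ n := by
    intro n
    induction n with
    | zero =>
      intro k hk
      have : k = 0 := by simpa using hk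
      subst this
      simp [hf00, hf01]
    | succ n ih =>
      intro k hk
      rw [pow_succ] at hk
      have hdiv : L.tau x y / 2 ^ (n + 1) = L.tau x y / 2 ^ n / 2 := by
        rw [pow_succ, div_eq_mul_inv, div_eq_mul_inv, div_eq_mul_inv,
          ENNReal.mul_inv (by simp) (by simp), mul_assoc]
      have htl : ∀ j, j < 2 ^ n → L.timelike (f n j) (f n (j + 1)) := by
        intro j hj
        rw [← L.tau_pos_iff_timelike, ih j hj]
        exact ENNReal.div_pos hτ0.ne' (by simp)
      obtain ⟨j, rfl | rfl⟩ := Nat.even_or_odd' k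
      · have hj : j < 2 ^ n := by omega
        rw [hf_even, hf_odd, (hm _ _ (htl j hj)).1.1, ih j hj, hdiv]
      · have hj : j < 2 ^ n := by omega
        rw [show 2 * j + 1 + 1 = 2 * (j + 1) by ring, hf_even, hf_odd,
          (hm _ _ (htl j hj)).1.2, ih j hj, hdiv]
  have htl : ∀ n j, j < 2 ^ n → L.timelike (f n j) (f n (j + 1)) := by
    intro n j hj
    rw [← L.tau_pos_iff_timelike, hτ n j hj]
    exact ENNReal.div_pos hτ0.ne' (by simp)
  have hcs : ∀ n k, L.causal (f n k) (f n (k + 1)) := by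
    intro n k
    by_cases hk : k < 2 ^ n
    · exact L.timelike_causal (htl n k hk)
    · rw [hf_ge n k (by omega), hf_ge n (k + 1) (by omega)]; exact L.causal_refl _
  have hcc : ∀ n j k, j ≤ k → L.causal (f n j) (f n k) := by
    intro n j k hjk
    induction k, hjk using Nat.le_induction with
    | base => exact L.causal_refl _
    | succ k _ ih => exact L.causal_trans ih (hcs n k)
  set D := T y - T x with hD
  have hD0 : 0 ≤ D := sub_nonneg.2 (hmono _ _ (L.timelike_causal hxy))
  have hr0 : 0 ≤ 1 - c := by linarith
  have hgap : ∀ n k, T (f n (k + 1)) - T (f n k) ≤ D * (1 - c) ^ n := by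
    intro n
    induction n with
    | zero =>
      intro k
      by_cases hk : k = 0
      · subst hk; simp [hf00, hf01, hD]
      · rw [hf_ge 0 k (by simp; omega), hf_ge 0 (k + 1) (by simp)]; simpa using hD0
    | succ n ih =>
      intro k
      have key : ∀ j, T (m (f n j) (f n (j + 1))) - T (f n j) ≤ D * (1 - c) ^ (n + 1) ∧
          T (f n (j + 1)) - T (m (f n j) (f n (j + 1))) ≤ D * (1 - c) ^ (n + 1) := by
        intro j
        by_cases hj : j < 2 ^ n
        · have h1 := (hm _ _ (htl n j hj)).2
          have h2 := mul_le_mul_of_nonneg_right (ih j) hr0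
          rw [pow_succ]
          constructor <;> nlinarith [h1.1, h1.2]
        · rw [hf_ge n j (by omega), hf_ge n (j + 1) (by omega), hmyy]
          have : 0 ≤ D * (1 - c) ^ (n + 1) := by positivity
          simpa using this
      obtain ⟨j, rfl | rfl⟩ := Nat.even_or_odd' k
      · rw [hf_even, hf_odd]; exact (key j).1
      · rw [show 2 * j + 1 + 1 = 2 * (j + 1) by ring, hf_even, hf_odd]; exact (key j).2
  have hdist : ∀ n k, dist (f n k) (f n (k + 1)) ≤ D * (1 - c) ^ n :=
    fun n k => (hd _ _ (hcs n k)).trans (hgap n k)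
  -- approximating step curves
  set g : ℕ → ℝ → X := fun n t => f n ⌊2 ^ n * t⌋₊ with hg
  have hgd : ∀ t n, dist (g n t) (g (n + 1) t) ≤ D * (1 - c) ^ n := by
    intro t n
    have hpos : 0 ≤ D * (1 - c) ^ n := by positivity
    simp only [hg]
    rcases floor_double n t with h | h
    · rw [h, hf_even]; simpa using hpos
    · rw [h]
      have h1 := hdist (n + 1) (2 * ⌊2 ^ n * t⌋₊)
      rw [hf_even] at h1
      refine h1.trans ?_
      rw [pow_succ, ← mul_assoc]
      exact mul_le_of_le_one_right hpos (by linarith)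
  have hlim : ∀ t, ∃ z, Tendsto (fun n => g n t) atTop (𝓝 z) := fun t =>
    cauchySeq_tendsto_of_complete
      (cauchySeq_of_le_geometric (1 - c) D (by linarith) (hgd t))
  choose γ hγ using hlim
  have hγd : ∀ t n, dist (g n t) (γ t) ≤ D * (1 - c) ^ n / c := by
    intro t n
    have := dist_le_of_le_geometric_of_tendsto (1 - c) D (by linarith) (hgd t) (hγ t) n
    simpa using this
  have hg_mono : ∀ n s t, s ≤ t → L.causal (g n s) (g n t) := by
    intro n s t hst
    exact hcc n _ _ (Nat.floor_le_floor (by gcongr))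
  have hγdy : ∀ n k : ℕ, γ (k / 2 ^ n) = f n k := by
    intro n k
    refine tendsto_nhds_unique ((tendsto_add_atTop_iff_nat n).2 (hγ _)) ?_
    refine tendsto_const_nhds.congr fun j => ?_
    have : (2 : ℝ) ^ (j + n) * (k / 2 ^ n) = ((2 ^ j * k : ℕ) : ℝ) := by
      push_cast; rw [pow_add]; field_simp
    simp only [hg, this, Nat.floor_natCast]
    rw [add_comm, hf_pow]
  have hstep : ∀ n s t, s ≤ t → t < s + 1 / 2 ^ n → dist (g n s) (g n t) ≤ D * (1 - c) ^ n := by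
    intro n s t hst hlt
    have hpos : 0 ≤ D * (1 - c) ^ n := by positivity
    have h1 : ⌊2 ^ n * s⌋₊ ≤ ⌊2 ^ n * t⌋₊ := Nat.floor_le_floor (by gcongr)
    have h2 : ⌊2 ^ n * t⌋₊ < ⌊2 ^ n * s⌋₊ + 2 := by
      rw [Nat.floor_lt' (by omega)]
      have h3 := Nat.lt_floor_add_one (2 ^ n * s)
      have h4 : 2 ^ n * t < 2 ^ n * (s + 1 / 2 ^ n) := by gcongr
      rw [mul_add, mul_one_div_cancel (by positivity)] at h4
      push_cast; linarith
    simp only [hg]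
    have h5 : ⌊2 ^ n * t⌋₊ = ⌊2 ^ n * s⌋₊ ∨ ⌊2 ^ n * t⌋₊ = ⌊2 ^ n * s⌋₊ + 1 := by omega
    rcases h5 with h | h
    · rw [h]; simpa using hpos
    · rw [h]; exact hdist _ _
  have hstep' : ∀ n s t, |s - t| < 1 / 2 ^ n → dist (g n s) (g n t) ≤ D * (1 - c) ^ n := by
    intro n s t h
    rw [abs_lt] at h
    rcases le_total s t with h' | h'
    · exact hstep n s t h' (by linarith)
    · rw [dist_comm]; exact hstep n t s h' (by linarith)
  have hγc : Continuous γ := by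
    rw [Metric.continuous_iff]
    intro b ε hε
    have hlim0 : Tendsto (fun n : ℕ => D * (1 - c) ^ n / c + D * (1 - c) ^ n
        + D * (1 - c) ^ n / c) atTop (𝓝 0) := by
      have h0 := (tendsto_pow_atTop_nhds_zero_of_lt_one hr0 (by linarith : 1 - c < 1)).const_mul D
      simpa using ((h0.div_const c).add h0).add (h0.div_const c)
    obtain ⟨n, hn⟩ := (hlim0.eventually (gt_mem_nhds hε)).exists
    refine ⟨1 / 2 ^ n, by positivity, fun a ha => ?_⟩
    have h1 := hγd a n
    have h2 := hγd b n
    have h3 := hstep' n a b (by rwa [Real.dist_eq] at ha)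
    have h4 := dist_triangle4 (γ a) (g n a) (g n b) (γ b)
    rw [dist_comm (γ a) (g n a)] at h4
    linarith
  have hγm : ∀ s t, s ≤ t → L.causal (γ s) (γ t) := by
    apply causal_of_local
    intro r
    obtain ⟨U, hU, hcl⟩ := h_lcc (γ r)
    obtain ⟨O, hOU, hO, hrO⟩ := mem_nhds_iff.1 hU
    refine ⟨γ ⁻¹' O, hγc.continuousAt (hO.mem_nhds hrO), fun u hu v hv huv => ?_⟩
    have e1 := (hγ u).eventually (hO.mem_nhds hu)
    have e2 := (hγ v).eventually (hO.mem_nhds hv)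
    obtain ⟨N, hN⟩ := eventually_atTop.1 (e1.and e2)
    refine hcl (γ u) (γ v) (fun n => g (n + N) u) (fun n => g (n + N) v)
      (fun n => hOU (hN _ (by omega)).1) (fun n => hOU (hN _ (by omega)).2)
      (subset_closure (hOU hu)) (subset_closure (hOU hv))
      ((tendsto_add_atTop_iff_nat N).2 (hγ u)) ((tendsto_add_atTop_iff_nat N).2 (hγ v))
      (fun n => hg_mono _ _ _ huv)
  have hchain : ∀ n j i : ℕ, j + i ≤ 2 ^ n →
      (i : ℝ≥0∞) * (L.tau x y / 2 ^ n) ≤ L.tau (f n j) (f n (j + i)) := by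
    intro n j i
    induction i with
    | zero => simp
    | succ i ih =>
      intro h
      have h1 := ih (by omega)
      have h2 := hτ n (j + i) (by omega)
      have h3 := L.tau_rev_triangle (hcc n j (j + i) (by omega)) (hcs n (j + i))
      rw [h2] at h3
      refine le_trans ?_ h3
      push_cast
      rw [add_mul, one_mul]
      gcongr
  have htmono : ∀ p q r s, L.causal p q → L.causal q r → L.causal r s →
      L.tau q r ≤ L.tau p s := by
    intro p q r s h1 h2 h3
    calc L.tau q r ≤ L.tau p q + L.tau q r := le_add_self
      _ ≤ L.tau p r := L.tau_rev_triangle h1 h2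
      _ ≤ L.tau p r + L.tau r s := le_self_add
      _ ≤ L.tau p s := L.tau_rev_triangle (L.causal_trans h1 h2) h3
  refine ⟨γ, hγc, ?_, ?_, hγm, ?_⟩
  · simpa [hf00] using hγdy 0 0
  · simpa [hf01] using hγdy 0 1
  intro s t hs hst ht
  have happ : ∀ n : ℕ, ENNReal.ofReal (t - s - 2 / 2 ^ n) * L.tau x y ≤ L.tau (γ s) (γ t) := by
    intro n
    have h2n : (0 : ℝ) < 2 ^ n := by positivity
    have hs1 := Nat.lt_floor_add_one (2 ^ n * s)
    have ht0 : 0 ≤ 2 ^ n * t := by have := hs.trans hst.le; positivity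
    have ht1 := Nat.floor_le ht0
    have ht2 := Nat.lt_floor_add_one (2 ^ n * t)
    have hs2 := Nat.floor_le (show 0 ≤ 2 ^ n * s by positivity)
    set j := ⌊2 ^ n * s⌋₊ + 1 with hj
    set k := ⌊2 ^ n * t⌋₊ with hk
    have hjr : (j : ℝ) = ⌊2 ^ n * s⌋₊ + 1 := by rw [hj]; push_cast; rfl
    have hreal : t - s - 2 / 2 ^ n ≤ ((k : ℝ) - j) / 2 ^ n := by
      rw [le_div_iff₀ h2n, sub_mul, sub_mul, div_mul_cancel₀ _ h2n.ne']
      linarith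
    rcases le_or_gt j k with hjk | hjk
    · obtain ⟨i, hi⟩ := Nat.exists_eq_add_of_le hjk
      have hk2 : k ≤ 2 ^ n := by
        have : (k : ℝ) ≤ (2 ^ n : ℕ) := by push_cast; nlinarith
        exact_mod_cast this
      have h1 := hchain n j i (by omega)
      rw [← hi] at h1
      have h2 : L.causal (γ s) (f n j) := by
        rw [← hγdy]; apply hγm
        rw [le_div_iff₀ h2n]; linarith
      have h3 : L.causal (f n k) (γ t) := by
        rw [← hγdy]; apply hγm
        rw [div_le_iff₀ h2n]; linarith
      refine le_trans ?_ (h1.trans (htmono _ _ _ _ h2 (hcc n j k hjk) h3))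
      have h4 : (i : ℝ≥0∞) * (L.tau x y / 2 ^ n) = ENNReal.ofReal (i / 2 ^ n) * L.tau x y := by
        rw [ENNReal.ofReal_div_of_pos h2n, ENNReal.ofReal_natCast,
          ENNReal.ofReal_pow (by norm_num)]
        simp only [ENNReal.ofReal_ofNat, div_eq_mul_inv]
        ring
      rw [h4]
      gcongr
      have : (k : ℝ) = j + i := by exact_mod_cast hi
      rw [this] at hreal
      simpa using hreal
    · have : t - s - 2 / 2 ^ n ≤ 0 := by
        refine hreal.trans (div_nonpos_of_nonpos_of_nonneg ?_ h2n.le)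
        have : (k : ℝ) < j := by exact_mod_cast hjk
        linarith
      rw [ENNReal.ofReal_of_nonpos this]; simp
  refine le_of_tendsto' (x := atTop) (ENNReal.Tendsto.mul_const (b := L.tau x y)
    (ENNReal.tendsto_ofReal (a := t - s) ?_) ?_) happ
  · have h0 := (tendsto_pow_atTop_nhds_zero_of_lt_one
      (by norm_num : (0 : ℝ) ≤ 1 / 2) (by norm_num)).const_mul 2
    have h1 := h0.const_sub (t - s)
    simp only [mul_zero, sub_zero] at h1
    refine h1.congr fun n => ?_
    rw [one_div_pow, mul_one_div]
  · left
    simpa using hst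

end TauMid

/-- **τ-midpoints imply being causally geodesic.**
Let `X` be a locally causally closed and sufficiently causally connected Lorentzian
pre-length space, `T` a locally anti-Lipschitz time function, suppose the background
metric is the null distance `d_T` and `(X, d_T)` is complete. If `X` has τ-midpoints and
there is `c ∈ (0, 1/2]` such that every `p ≪ q` admits a τ-midpoint `m` with
`(1-c)·T p + c·T q ≤ T m ≤ c·T p + (1-c)·T q`, then `X` is causally geodesic. -/
theorem tau_midpoints_imply_causally_geodesic
    {X : Type*} [MetricSpace X] [CompleteSpace X]
    (L : LorentzianPreLengthSpace X) (T : X → ℝ)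
    (h_lcc : L.LocallyCausallyClosed)
    (h_scc : L.SufficientlyCausallyConnected)
    (hT : L.IsTimeFunction T)
    (hT_aL : L.IsLocallyAntiLipschitz T)
    (h_bg : ∀ p q : X, dist p q = L.nullDist T p q)
    (h_mid : L.HasTauMidpoints)
    (c : ℝ) (hc0 : 0 < c) (hc2 : c ≤ 1 / 2)
    (h_comp : ∀ p q : X, L.timelike p q → ∃ m : X, L.IsTauMidpoint p m q ∧
      (1 - c) * T p + c * T q ≤ T m ∧ T m ≤ c * T p + (1 - c) * T q) :
    L.IsCausallyGeodesic := by
  obtain ⟨-, h_cpc, -⟩ := h_scc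
  refine ⟨fun x y hxy => ?_, fun x y hxy _ => h_cpc.2 x y hxy⟩
  have hirr : ∀ x, ¬ L.timelike x x := by
    intro x hx
    obtain ⟨γ, a, b, ⟨hab, -, ⟨s, hs, t, ht, hne⟩, htl⟩, ha, hb⟩ := h_cpc.1 x x hx
    have key : ∀ u ∈ Set.Icc a b, γ u = x := by
      intro u hu
      by_contra hux
      have hua : a < u := lt_of_le_of_ne hu.1 (by rintro rfl; exact hux ha)
      have hub : u < b := lt_of_le_of_ne hu.2 (by rintro rfl; exact hux hb)
      have h1 := L.timelike_causal (htl le_rfl hua hu.2)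
      have h2 := L.timelike_causal (htl hu.1 hub le_rfl)
      rw [ha] at h1
      rw [hb] at h2
      have h3 := hT.2 _ _ ⟨h1, Ne.symm hux⟩
      have h4 := hT.2 _ _ ⟨h2, hux⟩
      linarith
    exact hne ((key s hs).trans (key t ht).symm)
  have hmono : ∀ p q, L.causal p q → T p ≤ T q := by
    intro p q h
    by_cases hpq : p = q
    · rw [hpq]
    · exact (hT.2 _ _ ⟨h, hpq⟩).le
  obtain ⟨γ, hc, h0, h1, hm, hτ⟩ := TauMid.main_curve L T h_lcc
    (TauMid.dist_le L T h_cpc hT h_bg) hirr hmono c hc0 hc2 h_comp x y hxy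
  refine ⟨γ, 0, 1, ⟨one_pos, hc.continuousOn, ⟨0, by simp, 1, by simp, ?_⟩,
    fun s t _ hst _ => hm s t hst.le⟩, h0, h1, le_antisymm ?_ ?_⟩
  · rw [h0, h1]; rintro rfl; exact hirr _ hxy
  · unfold LorentzianPreLengthSpace.tauLength
    refine iInf_le_of_le 1 (iInf_le_of_le ![0, 1] (iInf_le_of_le ?_
      (iInf_le_of_le rfl (iInf_le_of_le rfl ?_))))
    · intro i j hij
      fin_cases i <;> fin_cases j <;> simp_all
    · simp [h0, h1]
  · unfold LorentzianPreLengthSpace.tauLength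
    refine le_iInf fun N => le_iInf fun t => le_iInf fun ht => le_iInf fun ht0 =>
      le_iInf fun ht1 => ?_
    have hb0 : ∀ i, 0 ≤ t i := fun i => ht0 ▸ ht.monotone (Fin.zero_le i)
    have hb1 : ∀ i, t i ≤ 1 := fun i => ht1 ▸ ht.monotone (Fin.le_last i)
    calc L.tau x y = ENNReal.ofReal (∑ i : Fin N, (t i.succ - t i.castSucc)) * L.tau x y := by
          have hs : ∑ i : Fin N, (t i.succ - t i.castSucc) = 1 := by
            have e1 := Fin.sum_univ_succ t
            have e2 := Fin.sum_univ_castSucc t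
            rw [Finset.sum_sub_distrib]
            linarith
          rw [hs]; simp
      _ = ∑ i : Fin N, ENNReal.ofReal (t i.succ - t i.castSucc) * L.tau x y := by
          rw [ENNReal.ofReal_sum_of_nonneg, Finset.sum_mul]
          intro i _
          exact sub_nonneg.2 (ht.monotone i.castSucc_lt_succ.le)
      _ ≤ _ := Finset.sum_le_sum fun i _ =>
          hτ _ _ (hb0 _) (ht i.castSucc_lt_succ) (hb1 _)
end

section
/- Let X be a Lorentzian pre-length space that is locally causally closed and sufficiently causally connected, let T : X → ℝ be a time function, and suppose the background metric of X is the null distance d_T of T and that (X, d_T) is a complete metric space. Assume X has approximate τ-midpoints, and assume there exist c ∈ (0, 1/2] and ε̂ > 0 such that for every pair p ≪ q there is a (τ(p,q)·ε̂)-τ-midpoint m of p and q with (1−c)·T(p) + c·T(q) ≤ T(m) ≤ c·T(p) + (1−c)·T(q). Then X is intrinsic: τ(x,y) = sup{ L_τ(γ) : γ a future-directed causal curve from x to y } for all x, y ∈ X (with sup ∅ = 0). -/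
open scoped ENNReal

namespace LorentzianPreLengthSpace

/-- A finite chain from `x` to `y` all of whose links satisfy `P`; `S` is the set of its
points and `a` the sum of the values of `f` on its links. -/
inductive Ch {α : Type*} (f : α → α → ℝ) (P : α → α → Prop) : α → α → Set α → ℝ → Prop
  | single {x y : α} : P x y → Ch f P x y {x, y} (f x y)
  | trans {x z y : α} {S S' : Set α} {a b : ℝ} :
      Ch f P x z S a → Ch f P z y S' b → Ch f P x y (S ∪ S') (a + b)

theorem Ch.mono {α : Type*} {f : α → α → ℝ} {P Q : α → α → Prop} (h : ∀ x y, P x y → Q x y)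
    {x y : α} {S : Set α} {a : ℝ} (hc : Ch f P x y S a) : Ch f Q x y S a := by
  induction hc with
  | single hp => exact .single (h _ _ hp)
  | trans _ _ h1 h2 => exact .trans h1 h2

theorem Ch.ends {α : Type*} {f : α → α → ℝ} {P : α → α → Prop}
    {x y : α} {S : Set α} {a : ℝ} (hc : Ch f P x y S a) : x ∈ S ∧ y ∈ S := by
  induction hc with
  | single hp => simp
  | trans _ _ h1 h2 => exact ⟨Or.inl h1.1, Or.inr h2.2⟩

/-- Refining every link. -/
theorem Ch.refine {α : Type*} {f : α → α → ℝ} {P Q : α → α → Prop}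
    (h : ∀ x y, P x y → ∀ η > 0, ∃ S a, Ch f Q x y S a ∧ f x y - η ≤ a)
    {x y : α} {S : Set α} {a : ℝ} (hc : Ch f P x y S a) :
    ∀ η > 0, ∃ S' a', Ch f Q x y S' a' ∧ S ⊆ S' ∧ a - η ≤ a' := by
  induction hc with
  | single hp =>
    intro η hη
    obtain ⟨S, a, hS, ha⟩ := h _ _ hp η hη
    refine ⟨S, a, hS, ?_, ha⟩
    rintro z (rfl | rfl)
    · exact hS.ends.1
    · exact hS.ends.2
  | trans _ _ h1 h2 =>
    intro η hη
    obtain ⟨S1, a1, c1, s1, e1⟩ := h1 (η / 2) (by positivity)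
    obtain ⟨S2, a2, c2, s2, e2⟩ := h2 (η / 2) (by positivity)
    exact ⟨_, _, .trans c1 c2, Set.union_subset_union s1 s2, by linarith⟩

section Real

/-- Splitting a real chain at a point. -/
theorem Ch.split {f : ℝ → ℝ → ℝ} {A B δ : ℝ} (hδ : 0 ≤ δ)
    (hf0 : ∀ u v, 0 ≤ f u v)
    (hf : ∀ u v w, A ≤ u → u ≤ v → v ≤ w → w ≤ B → f u v + f v w ≤ f u w)
    {u v : ℝ} {S : Set ℝ} {a : ℝ}
    (hc : Ch f (fun u v => A ≤ u ∧ u ≤ v ∧ v ≤ B ∧ f u v ≤ δ) u v S a) :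
    A ≤ u ∧ u ≤ v ∧ v ≤ B ∧ a ≤ f u v ∧ ∀ w, u ≤ w → w ≤ v →
      ∃ S1 a1 S2 a2, Ch f (fun u v => A ≤ u ∧ u ≤ v ∧ v ≤ B ∧ f u v ≤ δ) u w S1 a1 ∧
        Ch f (fun u v => A ≤ u ∧ u ≤ v ∧ v ≤ B ∧ f u v ≤ δ) w v S2 a2 ∧ a ≤ a1 + a2 + δ := by
  induction hc with
  | @single u v hp =>
    obtain ⟨h1, h2, h3, h4⟩ := hp
    refine ⟨h1, h2, h3, le_rfl, fun w hw hw' => ?_⟩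
    have := hf u w v h1 hw hw' h3
    have i1 := hf0 u w
    have i2 := hf0 w v
    exact ⟨_, _, _, _, .single ⟨h1, hw, by linarith, by linarith⟩,
      .single ⟨by linarith, hw', h3, by linarith⟩, by linarith⟩
  | @trans u z v S S' a b c1 c2 h1 h2 =>
    obtain ⟨p1, p2, p3, p4, p5⟩ := h1
    obtain ⟨q1, q2, q3, q4, q5⟩ := h2
    refine ⟨p1, p2.trans q2, q3, ?_, fun w hw hw' => ?_⟩
    · have := hf u z v p1 p2 q2 q3
      linarith
    · rcases le_total w z with h | h
      · obtain ⟨S1, a1, S2, a2, k1, k2, k3⟩ := p5 w hw h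
        exact ⟨_, _, _, _, k1, .trans k2 c2, by linarith⟩
      · obtain ⟨S1, a1, S2, a2, k1, k2, k3⟩ := q5 w h hw'
        exact ⟨_, _, _, _, .trans c1 k1, k2, by linarith⟩

theorem Ch.partition {f : ℝ → ℝ → ℝ} {A B δ : ℝ} (hδ : 0 ≤ δ)
    (hf0 : ∀ u v, 0 ≤ f u v)
    (hf : ∀ u v w, A ≤ u → u ≤ v → v ≤ w → w ≤ B → f u v + f v w ≤ f u w) (N : ℕ) :
    ∀ (t : Fin (N + 1) → ℝ) {S : Set ℝ} {a : ℝ}, StrictMono t →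
    Ch f (fun u v => A ≤ u ∧ u ≤ v ∧ v ≤ B ∧ f u v ≤ δ) (t 0) (t (Fin.last N)) S a →
    a - (N + 1) * δ ≤ ∑ i : Fin N, f (t i.castSucc) (t i.succ) := by
  induction N with
  | zero =>
    intro t S a ht hc
    obtain ⟨h1, h2, h3, h4, -⟩ := hc.split hδ hf0 hf
    obtain ⟨S1, a1, S2, a2, k1, k2, k3⟩ := (hc.split hδ hf0 hf).2.2.2.2 (t 0) le_rfl h2
    have e : Fin.last 0 = (0 : Fin 1) := rfl
    rw [e] at h3 h4
    have := hf (t 0) (t 0) (t 0) h1 le_rfl le_rfl h3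
    simp
    linarith
  | succ N ih =>
    intro t S a ht hc
    obtain ⟨S1, a1, S2, a2, k1, k2, k3⟩ := (hc.split hδ hf0 hf).2.2.2.2 (t 1)
      (ht.monotone (Fin.zero_le _)) (ht.monotone (Fin.le_last _))
    have hk := (k1.split hδ hf0 hf).2.2.2.1
    have := ih (fun i => t i.succ) (S := S2) (a := a2)
      (fun i j h => ht (Fin.succ_lt_succ_iff.2 h)) k2
    rw [Fin.sum_univ_succ]
    simp only [Fin.castSucc_zero, Fin.succ_zero_eq_one, ← Fin.succ_castSucc]
    push_cast
    have h0 := hk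
    linarith

end Real

variable {X : Type*} [MetricSpace X] (L : LorentzianPreLengthSpace X)

/-- The real-valued time separation. -/
noncomputable def sig (x y : X) : ℝ := (L.tau x y).toReal

theorem sig_nonneg (x y : X) : 0 ≤ L.sig x y := ENNReal.toReal_nonneg

variable {L}

theorem tau_ne_top (h_mid : L.HasApproxTauMidpoints) (x y : X) : L.tau x y ≠ ⊤ := by
  intro h
  obtain ⟨m, hm, -⟩ := h_mid x y (L.tau_pos_iff_timelike.1 (by simp [h])) 1 one_pos
  rw [h, ENNReal.top_div_of_ne_top (by simp)] at hm
  exact not_top_lt hm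

theorem sig_add (h_mid : L.HasApproxTauMidpoints) {x y z : X} (h1 : L.causal x y)
    (h2 : L.causal y z) : L.sig x y + L.sig y z ≤ L.sig x z := by
  unfold sig
  rw [← ENNReal.toReal_add (tau_ne_top h_mid _ _) (tau_ne_top h_mid _ _)]
  exact ENNReal.toReal_mono (tau_ne_top h_mid _ _) (L.tau_rev_triangle h1 h2)

theorem sig_pos_iff (h_mid : L.HasApproxTauMidpoints) {x y : X} :
    0 < L.sig x y ↔ L.timelike x y := by
  rw [← L.tau_pos_iff_timelike]
  unfold sig
  rw [ENNReal.toReal_pos_iff]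
  simp [lt_top_iff_ne_top, tau_ne_top h_mid]

theorem sig_mid (h_mid : L.HasApproxTauMidpoints) {x y : X} (h : L.timelike x y)
    {ε : ℝ} (hε : 0 < ε) : ∃ m, L.sig x y / 2 - ε < L.sig x m ∧ L.sig x m < L.sig x y / 2 + ε ∧
      L.sig x y / 2 - ε < L.sig m y ∧ L.sig m y < L.sig x y / 2 + ε := by
  obtain ⟨m, h1, h2, h3, h4⟩ := h_mid x y h (ENNReal.ofReal ε) (by simpa using hε)
  have key : ∀ p q, L.tau p q = ENNReal.ofReal (L.sig p q) := fun p q =>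
    (ENNReal.ofReal_toReal (tau_ne_top h_mid p q)).symm
  have h2' : (2 : ℝ≥0∞) = ENNReal.ofReal 2 := by simp
  have a := L.sig_nonneg x m
  have b := L.sig_nonneg m y
  have d := L.sig_nonneg x y
  rw [key x y, key x m, h2', ← ENNReal.ofReal_div_of_pos two_pos,
    ← ENNReal.ofReal_add (by positivity) hε.le, ENNReal.ofReal_lt_ofReal_iff (by positivity)] at h1 h2
  rw [key x y, key m y, h2', ← ENNReal.ofReal_div_of_pos two_pos,
    ← ENNReal.ofReal_add (by positivity) hε.le, ENNReal.ofReal_lt_ofReal_iff (by positivity)] at h3 h4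
  exact ⟨m, by linarith, by linarith, by linarith, by linarith⟩

/-- Repeated approximate bisection. -/
theorem bisect (h_mid : L.HasApproxTauMidpoints) (n : ℕ) : ∀ x y : X, L.timelike x y →
    ∀ μ, (3 / 4 : ℝ) ^ n * L.sig x y ≤ μ → ∀ η > 0,
    ∃ S a, Ch L.sig (fun u v => L.causal u v ∧ L.sig u v ≤ μ) x y S a ∧
      L.sig x y - η ≤ a := by
  induction n with
  | zero =>
    intro x y h μ hμ η hη
    exact ⟨_, _, .single ⟨L.timelike_causal h, by simpa using hμ⟩, by linarith⟩
  | succ n ih =>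
    intro x y h μ hμ η hη
    have hp := (sig_pos_iff h_mid).2 h
    obtain ⟨m, h1, h2, h3, h4⟩ := sig_mid h_mid h
      (ε := min (η / 8) (L.sig x y / 4)) (by positivity)
    have e1 := min_le_left (η / 8) (L.sig x y / 4)
    have e2 := min_le_right (η / 8) (L.sig x y / 4)
    have p0 : (0 : ℝ) < (3 / 4) ^ n := by positivity
    obtain ⟨S1, a1, c1, i1⟩ := ih x m ((sig_pos_iff h_mid).1 (by linarith)) μ
      (by rw [pow_succ] at hμ; nlinarith) (η / 4) (by positivity)
    obtain ⟨S2, a2, c2, i2⟩ := ih m y ((sig_pos_iff h_mid).1 (by linarith)) μ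
      (by rw [pow_succ] at hμ; nlinarith) (η / 4) (by positivity)
    exact ⟨_, _, .trans c1 c2, by linarith⟩

theorem T_mono {T : X → ℝ} (hT : L.IsTimeFunction T) {x y : X} (h : L.causal x y) :
    T x ≤ T y := by
  by_cases e : x = y
  · rw [e]
  · exact (hT.2 x y ⟨h, e⟩).le

theorem ivt {T : X → ℝ} (hT : L.IsTimeFunction T) (hc : L.CausallyPathConnected) {x y : X}
    (h : L.causal x y) {v : ℝ} (h1 : T x ≤ v) (h2 : v ≤ T y) :
    ∃ z, L.causal x z ∧ L.causal z y ∧ T z = v := by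
  by_cases e : x = y
  · subst e
    exact ⟨x, h, h, le_antisymm h1 h2⟩
  · obtain ⟨γ, a, b, ⟨hab, hγ, -, hγ'⟩, rfl, rfl⟩ := hc.2 x y ⟨h, e⟩
    obtain ⟨s, hs, rfl⟩ := intermediate_value_Icc hab.le (hT.1.comp_continuousOn hγ) ⟨h1, h2⟩
    refine ⟨γ s, ?_, ?_, rfl⟩
    · rcases hs.1.eq_or_lt with r | r
      · rw [← r]; exact L.causal_refl _
      · exact hγ' le_rfl r hs.2
    · rcases hs.2.eq_or_lt with r | r
      · rw [r]; exact L.causal_refl _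
      · exact hγ' hs.1 r le_rfl

/-- Filling a link by a causal chain with small steps of `T`. -/
theorem fill (h_mid : L.HasApproxTauMidpoints) {T : X → ℝ} (hT : L.IsTimeFunction T)
    (hc : L.CausallyPathConnected) {δ μ : ℝ} (n : ℕ) : ∀ x y : X, L.causal x y →
    L.sig x y ≤ μ → T y - T x < 2 ^ n * δ →
    ∃ S a, Ch L.sig (fun u v => L.causal u v ∧ T v - T u < δ ∧ L.sig u v ≤ μ) x y S a ∧
      0 ≤ a := by
  induction n with
  | zero =>
    intro x y h hμ hδ
    exact ⟨_, _, .single ⟨h, by simpa using hδ, hμ⟩, L.sig_nonneg _ _⟩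
  | succ n ih =>
    intro x y h hμ hδ
    have hm := T_mono hT h
    obtain ⟨z, h1, h2, h3⟩ := ivt hT hc h (v := (T x + T y) / 2) (by linarith) (by linarith)
    have := sig_add h_mid h1 h2
    have i1 := L.sig_nonneg x z
    have i2 := L.sig_nonneg z y
    rw [pow_succ] at hδ
    obtain ⟨S1, a1, c1, j1⟩ := ih x z h1 (by linarith) (by rw [h3]; linarith)
    obtain ⟨S2, a2, c2, j2⟩ := ih z y h2 (by linarith) (by rw [h3]; linarith)
    exact ⟨_, _, .trans c1 c2, by linarith⟩

theorem fill_chain (h_mid : L.HasApproxTauMidpoints) {T : X → ℝ} (hT : L.IsTimeFunction T)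
    (hc : L.CausallyPathConnected) {δ μ : ℝ} (hδ : 0 < δ) (hμ : 0 ≤ μ) {x y : X} {S : Set X} {a : ℝ}
    (h : Ch L.sig (fun u v => L.causal u v ∧ L.sig u v ≤ μ) x y S a) :
    ∃ S' a', Ch L.sig (fun u v => L.causal u v ∧ T v - T u < δ ∧ L.sig u v ≤ μ) x y S' a' ∧
      a - (T y - T x) / δ * μ ≤ a' := by
  induction h with
  | @single x y hp =>
    obtain ⟨h1, h2⟩ := hp
    have hm := T_mono hT h1
    by_cases hs : T y - T x < δ
    · refine ⟨_, _, .single ⟨h1, hs, h2⟩, ?_⟩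
      have : 0 ≤ (T y - T x) / δ * μ := mul_nonneg (div_nonneg (by linarith) hδ.le) hμ
      linarith
    · obtain ⟨n, hn⟩ := pow_unbounded_of_one_lt ((T y - T x) / δ) (one_lt_two (α := ℝ))
      obtain ⟨S, a, c1, ha⟩ := fill h_mid hT hc (δ := δ) (μ := μ) n x y h1 h2
        ((div_lt_iff₀ hδ).1 hn)
      refine ⟨S, a, c1, ?_⟩
      have : 1 ≤ (T y - T x) / δ := (one_le_div hδ).2 (not_lt.1 hs)
      nlinarith
  | @trans x z y S S' a b _ _ h1 h2 =>
    obtain ⟨S1, a1, c1, j1⟩ := h1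
    obtain ⟨S2, a2, c2, j2⟩ := h2
    refine ⟨_, _, .trans c1 c2, ?_⟩
    have : (T y - T x) / δ * μ = (T z - T x) / δ * μ + (T y - T z) / δ * μ := by ring
    linarith

/-- The key lemma: fine chains with small loss. -/
theorem fine (h_mid : L.HasApproxTauMidpoints) {T : X → ℝ} (hT : L.IsTimeFunction T)
    (hc : L.CausallyPathConnected) {δ : ℝ} (hδ : 0 < δ) {x y : X} (h : L.causal x y)
    {η : ℝ} (hη : 0 < η) :
    ∃ S a, Ch L.sig (fun u v => L.causal u v ∧ T v - T u < δ ∧ L.sig u v ≤ δ) x y S a ∧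
      L.sig x y - η ≤ a := by
  have hm := T_mono hT h
  have hD : 0 ≤ (T y - T x) / δ := div_nonneg (by linarith) hδ.le
  set D := (T y - T x) / δ with hDdef
  set μ := min δ (η / 2 / (D + 1)) with hμdef
  have hμ : 0 < μ := by positivity
  have hμ2 : D * μ ≤ η / 2 := by
    have : μ ≤ η / 2 / (D + 1) := min_le_right _ _
    rw [le_div_iff₀ (by positivity)] at this
    nlinarith
  obtain ⟨S, a, c1, i1⟩ : ∃ S a, Ch L.sig (fun u v => L.causal u v ∧ L.sig u v ≤ μ) x y S a ∧
      L.sig x y - η / 2 ≤ a := by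
    by_cases ht : L.timelike x y
    · have hp := (sig_pos_iff h_mid).2 ht
      obtain ⟨n, hn⟩ := exists_pow_lt_of_lt_one (show 0 < μ / L.sig x y by positivity)
        (show (3 / 4 : ℝ) < 1 by norm_num)
      exact bisect h_mid n x y ht μ ((lt_div_iff₀ hp).1 hn).le _ (by positivity)
    · rw [← sig_pos_iff h_mid] at ht
      exact ⟨_, _, .single ⟨h, by linarith⟩, by linarith⟩
  obtain ⟨S', a', c2, i2⟩ := fill_chain h_mid hT hc hδ hμ.le c1
  exact ⟨S', a', c2.mono fun u v hp => ⟨hp.1, hp.2.1, hp.2.2.trans (min_le_left _ _)⟩,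
    by linarith⟩

theorem Ch.between {f : X → X → ℝ} {P : X → X → Prop} (hP : ∀ u v, P u v → L.causal u v)
    {x y : X} {S : Set X} {a : ℝ} (h : Ch f P x y S a) :
    (L.causal x y ∧ ∀ s ∈ S, L.causal x s ∧ L.causal s y) ∧
      ∀ s ∈ S, ∀ t ∈ S, L.causal s t ∨ L.causal t s := by
  induction h with
  | @single x y hp =>
    have := hP _ _ hp
    have hx := L.causal_refl x
    have hy := L.causal_refl y
    refine ⟨⟨this, ?_⟩, ?_⟩
    · rintro s (rfl | rfl) <;> simp [*]
    · rintro s (rfl | rfl) t (rfl | rfl) <;> simp [*]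
  | @trans x z y S S' a b _ _ h1 h2 =>
    obtain ⟨⟨p1, p2⟩, p3⟩ := h1
    obtain ⟨⟨q1, q2⟩, q3⟩ := h2
    refine ⟨⟨L.causal_trans p1 q1, ?_⟩, ?_⟩
    · rintro s (hs | hs)
      · exact ⟨(p2 s hs).1, L.causal_trans (p2 s hs).2 q1⟩
      · exact ⟨L.causal_trans p1 (q2 s hs).1, (q2 s hs).2⟩
    · rintro s (hs | hs) t (ht | ht)
      · exact p3 s hs t ht
      · exact .inl (L.causal_trans (p2 s hs).2 (q2 t ht).1)
      · exact .inr (L.causal_trans (p2 t ht).2 (q2 s hs).1)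
      · exact q3 s hs t ht

theorem Ch.dense {f : X → X → ℝ} {P : X → X → Prop} {T : X → ℝ} {δ : ℝ}
    (hP : ∀ u v, P u v → T v - T u < δ)
    {x y : X} {S : Set X} {a : ℝ} (h : Ch f P x y S a) :
    ∀ v, T x ≤ v → v ≤ T y → ∃ s ∈ S, |T s - v| < δ := by
  induction h with
  | @single x y hp =>
    intro v h1 h2
    have := hP _ _ hp
    exact ⟨x, by simp, by rw [abs_lt]; constructor <;> linarith⟩
  | @trans x z y S S' a b _ _ h1 h2 =>
    intro v hv hv'
    rcases le_total v (T z) with h | h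
    · obtain ⟨s, hs, h⟩ := h1 v hv h
      exact ⟨s, .inl hs, h⟩
    · obtain ⟨s, hs, h⟩ := h2 v h hv'
      exact ⟨s, .inr hs, h⟩

/-- Transport of a chain to the parameter line. -/
theorem Ch.toReal {T : X → ℝ} (hT : L.IsTimeFunction T) {δ A B : ℝ} {γ : ℝ → X}
    {x y : X} {S : Set X} {a : ℝ}
    (h : Ch L.sig (fun u v => L.causal u v ∧ T v - T u < δ ∧ L.sig u v ≤ δ) x y S a)
    (hS : ∀ s ∈ S, γ (T s) = s ∧ A ≤ T s ∧ T s ≤ B) :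
    ∃ S', Ch (fun u v => L.sig (γ u) (γ v))
      (fun u v => A ≤ u ∧ u ≤ v ∧ v ≤ B ∧ L.sig (γ u) (γ v) ≤ δ) (T x) (T y) S' a := by
  induction h with
  | @single x y hp =>
    have hx := hS x (by simp)
    have hy := hS y (by simp)
    have := Ch.single (f := fun u v => L.sig (γ u) (γ v))
      (P := fun u v => A ≤ u ∧ u ≤ v ∧ v ≤ B ∧ L.sig (γ u) (γ v) ≤ δ) (x := T x) (y := T y)
      ⟨hx.2.1, T_mono hT hp.1, hy.2.2, by rw [hx.1, hy.1]; exact hp.2.2⟩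
    simp only [hx.1, hy.1] at this
    exact ⟨_, this⟩
  | @trans x z y S S' a b _ _ h1 h2 =>
    obtain ⟨S1, c1⟩ := h1 fun s hs => hS s (.inl hs)
    obtain ⟨S2, c2⟩ := h2 fun s hs => hS s (.inr hs)
    exact ⟨_, .trans c1 c2⟩

theorem dist_le {T : X → ℝ} (hT : L.IsTimeFunction T) (hc : L.CausallyPathConnected)
    (h_bg : ∀ p q : X, dist p q = L.nullDist T p q) {x y : X} (h : L.causal x y) :
    dist x y ≤ T y - T x := by
  by_cases e : x = y
  · simp [e]
  · rw [h_bg]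
    have hm := T_mono hT h
    obtain ⟨γ, a, b, ⟨hab, hγ, -, hγ'⟩, rfl, rfl⟩ := hc.2 x y ⟨h, e⟩
    refine csInf_le ⟨0, ?_⟩ ?_
    · rintro l ⟨γ, a, b, N, t, -, -, -, -, -, -, -, rfl⟩
      exact Finset.sum_nonneg fun i _ => abs_nonneg _
    · refine ⟨γ, a, b, 1, ![a, b], hγ, ?_, rfl, rfl, ?_, rfl, rfl, ?_⟩
      · rw [Fin.strictMono_iff_lt_succ]
        intro i
        fin_cases i
        simpa using hab
      · intro i
        left
        fin_cases i
        intro u v h1 h2 h3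
        exact hγ' (by simpa using h1) h2 (by simpa using h3)
      · simp [abs_of_nonneg (sub_nonneg.2 hm)]

/-- The nested sequence of chains. -/
theorem exists_seq_chains (h_mid : L.HasApproxTauMidpoints) {T : X → ℝ}
    (hT : L.IsTimeFunction T) (hc : L.CausallyPathConnected) {x y : X} (h : L.causal x y)
    {ε : ℝ} (hε : 0 < ε) :
    ∃ (S : ℕ → Set X) (a : ℕ → ℝ), Monotone S ∧ ∀ k : ℕ,
      Ch L.sig (fun u v => L.causal u v ∧ T v - T u < 1 / ((k : ℝ) + 1) ∧
        L.sig u v ≤ 1 / ((k : ℝ) + 1)) x y (S k) (a k) ∧ L.sig x y - ε ≤ a k := by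
  let R : ℕ → Set X × ℝ → Prop := fun k p =>
    Ch L.sig (fun u v => L.causal u v ∧ T v - T u < 1 / ((k : ℝ) + 1) ∧
        L.sig u v ≤ 1 / ((k : ℝ) + 1)) x y p.1 p.2 ∧
      L.sig x y - ε * (1 - (1 / 2) ^ (k + 1)) ≤ p.2
  have h0 : ∃ p, R 0 p := by
    obtain ⟨S, a, c1, i1⟩ := fine h_mid hT hc (δ := 1 / (((0 : ℕ) : ℝ) + 1)) (by positivity) h
      (half_pos hε)
    exact ⟨(S, a), c1, by norm_num; linarith⟩
  have hs : ∀ k p, R k p → ∃ q, R (k + 1) q ∧ p.1 ⊆ q.1 := by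
    rintro k p ⟨c1, i1⟩
    obtain ⟨S', a', c2, i2, i3⟩ := c1.refine
      (Q := fun u v => L.causal u v ∧ T v - T u < 1 / (((k + 1 : ℕ) : ℝ) + 1) ∧
        L.sig u v ≤ 1 / (((k + 1 : ℕ) : ℝ) + 1))
      (fun u v hp η hη => fine h_mid hT hc (by positivity) hp.1 hη)
      (ε * (1 / 2) ^ (k + 2)) (by positivity)
    refine ⟨(S', a'), ⟨c2, ?_⟩, i2⟩
    have e : (1 / 2 : ℝ) ^ (k + 1) = 2 * (1 / 2) ^ (k + 2) := by rw [pow_succ _ (k + 1)]; ring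
    rw [e] at i1
    show _ - ε * (1 - (1 / 2) ^ (k + 2)) ≤ a'
    linarith
  choose p0 hp0 using h0
  choose! F hF using hs
  let q : ℕ → Set X × ℝ := fun n => Nat.rec p0 (fun k p => F k p) n
  have hq : ∀ k, R k (q k) := by
    intro k
    induction k with
    | zero => exact hp0
    | succ k ih => exact (hF k _ ih).1
  refine ⟨fun k => (q k).1, fun k => (q k).2, monotone_nat_of_le_succ fun k => (hF k _ (hq k)).2,
    fun k => ⟨(hq k).1, ?_⟩⟩
  have := (hq k).2
  have : 0 < ε * (1 / 2) ^ (k + 1) := by positivity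
  linarith

/-- Limit curve through a dense totally ordered set. -/
theorem exists_curve [CompleteSpace X] (hX : Nonempty X) {T : X → ℝ} (h_lcc : L.LocallyCausallyClosed)
    (hT : L.IsTimeFunction T) (hc : L.CausallyPathConnected)
    (h_bg : ∀ p q : X, dist p q = L.nullDist T p q) {A B : ℝ} {S : Set X}
    (htot : ∀ s ∈ S, ∀ t ∈ S, L.causal s t ∨ L.causal t s)
    (hS : ∀ δ > 0, ∀ v, A ≤ v → v ≤ B → ∃ s ∈ S, |T s - v| < δ) :
    ∃ γ : ℝ → X, ContinuousOn γ (Set.Icc A B) ∧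
      (∀ s ∈ S, A ≤ T s → T s ≤ B → γ (T s) = s) ∧
      ∀ ⦃s t : ℝ⦄, A ≤ s → s < t → t ≤ B → L.causal (γ s) (γ t) := by
  have hd : ∀ s ∈ S, ∀ t ∈ S, dist s t ≤ |T s - T t| := by
    intro s hs t ht
    rcases htot s hs t ht with h | h
    · rw [abs_sub_comm]
      exact (dist_le hT hc h_bg h).trans (le_abs_self _)
    · rw [dist_comm]
      exact (dist_le hT hc h_bg h).trans (le_abs_self _)
  have hle : ∀ s ∈ S, ∀ t ∈ S, T s < T t → L.causal s t := by
    intro s hs t ht h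
    rcases htot s hs t ht with h' | h'
    · exact h'
    · exact absurd (T_mono hT h') (not_le.2 h)
  have hex : ∀ v, ∃ g : X, v ∈ Set.Icc A B → ∀ s ∈ S, dist g s ≤ |v - T s| := by
    intro v
    by_cases hv : v ∈ Set.Icc A B
    · choose p hpS hp using fun n : ℕ => hS (1 / ((n : ℝ) + 1)) (by positivity) v hv.1 hv.2
      have hlim : Filter.Tendsto (fun n => T (p n)) Filter.atTop (nhds v) := by
        rw [tendsto_iff_dist_tendsto_zero]
        exact squeeze_zero (fun _ => dist_nonneg) (fun n => by
          rw [Real.dist_eq]; exact (hp n).le) tendsto_one_div_add_atTop_nhds_zero_nat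
      have hcau : CauchySeq p := by
        have h1 := hlim.cauchySeq
        rw [Metric.cauchySeq_iff] at h1 ⊢
        intro ε hε
        obtain ⟨N, hN⟩ := h1 ε hε
        exact ⟨N, fun m hm n hn => (hd _ (hpS m) _ (hpS n)).trans_lt (hN m hm n hn)⟩
      obtain ⟨g, hg⟩ := cauchySeq_tendsto_of_complete hcau
      refine ⟨g, fun _ s hs => ?_⟩
      exact le_of_tendsto_of_tendsto' (hg.dist tendsto_const_nhds)
        ((hlim.sub tendsto_const_nhds).abs) fun n => hd _ (hpS n) _ hs
    · obtain ⟨g⟩ := hX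
      exact ⟨g, fun h => absurd h hv⟩
  choose γ hγ using hex
  have hlip : ∀ v ∈ Set.Icc A B, ∀ w ∈ Set.Icc A B, dist (γ v) (γ w) ≤ |v - w| := by
    intro v hv w hw
    refine le_of_forall_pos_le_add fun ε hε => ?_
    obtain ⟨s, hs, h⟩ := hS (ε / 2) (by positivity) v hv.1 hv.2
    have h1 := hγ v hv s hs
    have h2 := hγ w hw s hs
    have h3 := dist_triangle_right (γ v) (γ w) s
    have h4 := abs_sub_le w v (T s)
    rw [abs_sub_comm w v] at h4
    rw [abs_sub_comm] at h
    linarith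
  have hcont : ContinuousOn γ (Set.Icc A B) := by
    have : LipschitzOnWith 1 γ (Set.Icc A B) := LipschitzOnWith.of_dist_le_mul fun v hv w hw => by
      simpa [Real.dist_eq] using hlip v hv w hw
    exact this.continuousOn
  -- approximating sequences in S
  have happ : ∀ v ∈ Set.Icc A B, ∀ U ∈ nhds (γ v), ∀ δ > 0, ∃ p : ℕ → X, (∀ n, p n ∈ S) ∧
      (∀ n, p n ∈ U) ∧ (∀ n, |T (p n) - v| < δ) ∧ Filter.Tendsto p Filter.atTop (nhds (γ v)) := by
    intro v hv U hU δ hδ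
    obtain ⟨r, hr, hrU⟩ := Metric.mem_nhds_iff.1 hU
    choose p hpS hp using fun n : ℕ =>
      hS (min (min r δ) (1 / ((n : ℝ) + 1))) (by positivity) v hv.1 hv.2
    have hb : ∀ n, dist (p n) (γ v) ≤ |T (p n) - v| := fun n => by
      rw [dist_comm, abs_sub_comm]; exact hγ v hv _ (hpS n)
    refine ⟨p, hpS, fun n => hrU ?_, fun n => ?_, ?_⟩
    · exact (hb n).trans_lt ((hp n).trans_le ((min_le_left _ _).trans (min_le_left _ _)))
    · exact (hp n).trans_le ((min_le_left _ _).trans (min_le_right _ _))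
    · rw [tendsto_iff_dist_tendsto_zero]
      exact squeeze_zero (fun _ => dist_nonneg) (fun n =>
        (hb n).trans ((hp n).le.trans (min_le_right _ _))) tendsto_one_div_add_atTop_nhds_zero_nat
  -- points of S close to `γ v`
  have hclose : ∀ v ∈ Set.Icc A B, ∀ s ∈ S, ∀ r, |v - T s| < r → s ∈ Metric.ball (γ v) r := by
    intro v hv s hs r h
    rw [Metric.mem_ball, dist_comm]
    exact (hγ v hv s hs).trans_lt h
  refine ⟨γ, hcont, fun s hs h1 h2 => ?_, fun s t hs hst ht => ?_⟩
  · have := hγ (T s) ⟨h1, h2⟩ s hs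
    rw [sub_self, abs_zero] at this
    exact dist_le_zero.1 this
  · have hsI : s ∈ Set.Icc A B := ⟨hs, hst.le.trans ht⟩
    have htI : t ∈ Set.Icc A B := ⟨hs.trans hst.le, ht⟩
    obtain ⟨m1, hm1S, hm1, hm1', hm1c⟩ : ∃ m ∈ S, s < T m ∧ T m < (s + t) / 2 ∧
        L.causal (γ s) m := by
      obtain ⟨U, hU, hcl⟩ := h_lcc (γ s)
      obtain ⟨r, hr, hrU⟩ := Metric.mem_nhds_iff.1 hU
      set e := min (r / 2) ((t - s) / 4) with he
      have he0 : 0 < e := by have : 0 < t - s := by linarith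
                             positivity
      have e1 : e ≤ r / 2 := min_le_left _ _
      have e2 : e ≤ (t - s) / 4 := min_le_right _ _
      obtain ⟨m, hm, hme⟩ := hS (e / 2) (by positivity) (s + e) (by linarith) (by linarith)
      rw [abs_lt] at hme
      have hmU : m ∈ U := hrU (hclose s hsI m hm r (by
        rw [abs_lt]; constructor <;> linarith))
      refine ⟨m, hm, by linarith, by linarith, ?_⟩
      obtain ⟨p, p1, p2, p3, p4⟩ := happ s hsI U hU (e / 2) (by positivity)
      refine hcl _ _ p (fun _ => m) p2 (fun _ => hmU) (subset_closure (mem_of_mem_nhds hU))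
        (subset_closure hmU) p4 tendsto_const_nhds fun n => hle _ (p1 n) _ hm ?_
      have := (abs_lt.1 (p3 n)).2
      linarith
    obtain ⟨m2, hm2S, hm2, hm2', hm2c⟩ : ∃ m ∈ S, T m < t ∧ (s + t) / 2 < T m ∧
        L.causal m (γ t) := by
      obtain ⟨U, hU, hcl⟩ := h_lcc (γ t)
      obtain ⟨r, hr, hrU⟩ := Metric.mem_nhds_iff.1 hU
      set e := min (r / 2) ((t - s) / 4) with he
      have he0 : 0 < e := by have : 0 < t - s := by linarith
                             positivity
      have e1 : e ≤ r / 2 := min_le_left _ _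
      have e2 : e ≤ (t - s) / 4 := min_le_right _ _
      obtain ⟨m, hm, hme⟩ := hS (e / 2) (by positivity) (t - e) (by linarith) (by linarith)
      rw [abs_lt] at hme
      have hmU : m ∈ U := hrU (hclose t htI m hm r (by
        rw [abs_lt]; constructor <;> linarith))
      refine ⟨m, hm, by linarith, by linarith, ?_⟩
      obtain ⟨p, p1, p2, p3, p4⟩ := happ t htI U hU (e / 2) (by positivity)
      refine hcl _ _ (fun _ => m) p (fun _ => hmU) p2 (subset_closure hmU)
        (subset_closure (mem_of_mem_nhds hU)) tendsto_const_nhds p4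
        fun n => hle _ hm _ (p1 n) ?_
      have := (abs_lt.1 (p3 n)).1
      linarith
    exact L.causal_trans hm1c (L.causal_trans (hle _ hm1S _ hm2S (by linarith)) hm2c)

theorem tauLength_le (γ : ℝ → X) {a b : ℝ} (hab : a < b) :
    L.tauLength γ a b ≤ L.tau (γ a) (γ b) := by
  unfold tauLength
  refine iInf_le_of_le 1 (iInf_le_of_le ![a, b] (iInf_le_of_le ?_ (iInf_le_of_le rfl
    (iInf_le_of_le rfl ?_))))
  · rw [Fin.strictMono_iff_lt_succ]
    intro i
    fin_cases i
    simpa using hab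
  · simp

theorem exists_long_curve [CompleteSpace X] {T : X → ℝ} (h_lcc : L.LocallyCausallyClosed)
    (hT : L.IsTimeFunction T) (hc : L.CausallyPathConnected)
    (h_bg : ∀ p q : X, dist p q = L.nullDist T p q) (h_mid : L.HasApproxTauMidpoints)
    {x y : X} (h : L.timelike x y) {ε : ℝ} (hε : 0 < ε) :
    ∃ γ a b, L.IsFutureCausalCurve γ a b ∧ γ a = x ∧ γ b = y ∧
      ENNReal.ofReal (L.sig x y - ε) ≤ L.tauLength γ a b := by
  have hcxy := L.timelike_causal h
  have hne : x ≠ y := by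
    rintro rfl
    have h1 := (sig_pos_iff h_mid).2 h
    have h2 := sig_add h_mid hcxy hcxy
    linarith
  have hTxy := hT.2 x y ⟨hcxy, hne⟩
  obtain ⟨S, a, hmono, hS⟩ := exists_seq_chains h_mid hT hc hcxy hε
  have hbt := fun k => (hS k).1.between (L := L) (fun u v hp => hp.1)
  have hmem : ∀ s ∈ ⋃ k, S k, T x ≤ T s ∧ T s ≤ T y := by
    intro s hs
    obtain ⟨k, hk⟩ := Set.mem_iUnion.1 hs
    have := (hbt k).1.2 s hk
    exact ⟨T_mono hT this.1, T_mono hT this.2⟩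
  obtain ⟨γ, g1, g2, g3⟩ := exists_curve ⟨x⟩ h_lcc hT hc h_bg (A := T x) (B := T y) (S := ⋃ k, S k)
    (by
      intro s hs t ht
      obtain ⟨k, hk⟩ := Set.mem_iUnion.1 hs
      obtain ⟨l, hl⟩ := Set.mem_iUnion.1 ht
      exact (hbt (max k l)).2 s (hmono (le_max_left _ _) hk) t (hmono (le_max_right _ _) hl))
    (by
      intro δ hδ v hv hv'
      obtain ⟨k, hk⟩ := exists_nat_one_div_lt hδ
      obtain ⟨s, hs, h⟩ := (hS k).1.dense (T := T) (fun u v hp => hp.2.1) v hv hv'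
      exact ⟨s, Set.mem_iUnion.2 ⟨k, hs⟩, h.trans hk⟩)
  have hx : γ (T x) = x := g2 x (Set.mem_iUnion.2 ⟨0, (hS 0).1.ends.1⟩) le_rfl hTxy.le
  have hy : γ (T y) = y := g2 y (Set.mem_iUnion.2 ⟨0, (hS 0).1.ends.2⟩) hTxy.le le_rfl
  refine ⟨γ, T x, T y, ⟨hTxy, g1, ⟨T x, ⟨le_rfl, hTxy.le⟩, T y, ⟨hTxy.le, le_rfl⟩, ?_⟩, g3⟩,
    hx, hy, ?_⟩
  · rw [hx, hy]; exact hne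
  unfold tauLength
  refine le_iInf fun N => le_iInf fun t => le_iInf fun ht => le_iInf fun ht0 => le_iInf fun ht1 => ?_
  have hsum : ∑ i : Fin N, L.tau (γ (t i.castSucc)) (γ (t i.succ)) =
      ENNReal.ofReal (∑ i : Fin N, L.sig (γ (t i.castSucc)) (γ (t i.succ))) := by
    rw [ENNReal.ofReal_sum_of_nonneg fun i _ => L.sig_nonneg _ _]
    exact Finset.sum_congr rfl fun i _ => (ENNReal.ofReal_toReal (tau_ne_top h_mid _ _)).symm
  rw [hsum]
  refine ENNReal.ofReal_le_ofReal ?_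
  have g3' : ∀ u v, T x ≤ u → u ≤ v → v ≤ T y → L.causal (γ u) (γ v) := by
    intro u v h1 h2 h3
    rcases h2.eq_or_lt with r | r
    · rw [r]; exact L.causal_refl _
    · exact g3 h1 r h3
  have hk : ∀ k : ℕ, L.sig x y - ε - (N + 1) * (1 / ((k : ℝ) + 1)) ≤
      ∑ i : Fin N, L.sig (γ (t i.castSucc)) (γ (t i.succ)) := by
    intro k
    obtain ⟨S', c1⟩ := (hS k).1.toReal hT (γ := γ) (A := T x) (B := T y) (fun s hs => by
      have hs' : s ∈ ⋃ k, S k := Set.mem_iUnion.2 ⟨k, hs⟩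
      have := hmem s hs'
      exact ⟨g2 s hs' this.1 this.2, this⟩)
    have := Ch.partition (f := fun u v => L.sig (γ u) (γ v)) (A := T x) (B := T y)
      (δ := 1 / ((k : ℝ) + 1)) (by positivity) (fun u v => L.sig_nonneg _ _)
      (fun u v w h1 h2 h3 h4 => sig_add h_mid (g3' u v h1 h2 (h3.trans h4))
        (g3' v w (h1.trans h2) h3 h4)) N t (S := S') (a := a k) ht (by rw [ht0, ht1]; exact c1)
    have h2 := (hS k).2
    linarith
  have hlim : Filter.Tendsto (fun k : ℕ => L.sig x y - ε - (N + 1) * (1 / ((k : ℝ) + 1)))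
      Filter.atTop (nhds (L.sig x y - ε - (N + 1) * 0)) :=
    tendsto_const_nhds.sub (tendsto_const_nhds.mul tendsto_one_div_add_atTop_nhds_zero_nat)
  have := le_of_tendsto' hlim hk
  simpa using this

end LorentzianPreLengthSpace

/-- **Approximate τ-midpoints imply being intrinsic.**
Let `X` be a locally causally closed and sufficiently causally connected Lorentzian
pre-length space, `T` a time function, suppose the background metric is the null distance
`d_T` and `(X, d_T)` is complete. If `X` has approximate τ-midpoints and there are
`c ∈ (0, 1/2]` and `ε̂ > 0` such that every `p ≪ q` admits a `(τ(p,q)·ε̂)`-τ-midpoint `m`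
with `(1-c)·T p + c·T q ≤ T m ≤ c·T p + (1-c)·T q`, then `X` is intrinsic. -/
theorem approx_tau_midpoints_imply_intrinsic
    {X : Type*} [MetricSpace X] [CompleteSpace X]
    (L : LorentzianPreLengthSpace X) (T : X → ℝ)
    (h_lcc : L.LocallyCausallyClosed)
    (h_scc : L.SufficientlyCausallyConnected)
    (hT : L.IsTimeFunction T)
    (h_bg : ∀ p q : X, dist p q = L.nullDist T p q)
    (h_mid : L.HasApproxTauMidpoints)
    (c : ℝ) (hc0 : 0 < c) (hc2 : c ≤ 1 / 2)
    (εhat : ℝ) (hεhat : 0 < εhat)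
    (h_comp : ∀ p q : X, L.timelike p q → ∃ m : X,
      L.IsEpsTauMidpoint (L.tau p q * ENNReal.ofReal εhat) p m q ∧
      (1 - c) * T p + c * T q ≤ T m ∧ T m ≤ c * T p + (1 - c) * T q) :
    L.IsIntrinsic := by
  intro x y
  have hc := h_scc.2.1
  apply le_antisymm
  · by_cases h : L.timelike x y
    · have hτ : L.tau x y = ENNReal.ofReal (L.sig x y) :=
        (ENNReal.ofReal_toReal (LorentzianPreLengthSpace.tau_ne_top h_mid x y)).symm
      refine ENNReal.le_of_forall_pos_le_add fun ε hε _ => ?_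
      obtain ⟨γ, a, b, h1, h2, h3, h4⟩ := LorentzianPreLengthSpace.exists_long_curve
        h_lcc hT hc h_bg h_mid h (ε := (ε : ℝ)) (by exact_mod_cast hε)
      have h5 : L.tau x y ≤ L.tauLength γ a b + ε := by
        rw [hτ]
        calc ENNReal.ofReal (L.sig x y) = ENNReal.ofReal ((L.sig x y - ε) + ε) := by simp
          _ ≤ ENNReal.ofReal (L.sig x y - ε) + ENNReal.ofReal ε := ENNReal.ofReal_add_le
          _ ≤ _ := by gcongr; simp
      refine h5.trans ?_
      gcongr
      exact le_iSup_of_le γ (le_iSup_of_le a (le_iSup_of_le b (le_iSup_of_le h1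
        (le_iSup_of_le h2 (le_iSup_of_le h3 le_rfl)))))
    · rw [← L.tau_pos_iff_timelike, not_lt] at h
      exact h.trans zero_le
  · refine iSup_le fun γ => iSup_le fun a => iSup_le fun b => iSup_le fun h => iSup_le fun ha =>
      iSup_le fun hb => ?_
    rw [← ha, ← hb]
    exact LorentzianPreLengthSpace.tauLength_le γ h.1
end

section
/- Let X be a chronological Lorentzian pre-length space such that τ is continuous on a neighbourhood of the diagonal {(x,x) : x ∈ X} in X × X. If X is geodesic, i.e., for every pair x ≪ y there exists a distance realizer from x to y, then X has τ-midpoints: for every pair x ≪ z there exists y ∈ X with τ(x,y) = ½τ(x,z) = τ(y,z). -/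
open scoped ENNReal

theorem aux_unif {X : Type*} [MetricSpace X] (L : LorentzianPreLengthSpace X)
    (h_chron : ∀ x : X, L.tau x x = 0)
    (h_cont : ∃ U : Set (X × X), IsOpen U ∧ Set.diagonal X ⊆ U ∧
      ContinuousOn (fun p : X × X => L.tau p.1 p.2) U)
    (γ : ℝ → X) (a b : ℝ) (hγ : ContinuousOn γ (Set.Icc a b)) (ε : ℝ≥0∞) (hε : 0 < ε) :
    ∃ δ > 0, ∀ s ∈ Set.Icc a b, ∀ t ∈ Set.Icc a b, dist s t < δ → L.tau (γ s) (γ t) < ε := by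
  obtain ⟨U, hU, hdU, hc⟩ := h_cont
  have hg : Continuous (fun s : Set.Icc a b => γ s) := continuousOn_iff_continuous_domRestrict.1 hγ
  have key : {p : Set.Icc a b × Set.Icc a b | L.tau (γ p.1) (γ p.2) < ε} ∈
      uniformity (Set.Icc a b) := by
    rw [← nhdsSet_diagonal_eq_uniformity, mem_nhdsSet_iff_forall]
    rintro ⟨s, t⟩ hst
    obtain rfl : s = t := hst
    have h1 : ContinuousAt (fun p : X × X => L.tau p.1 p.2) (γ s, γ s) :=
      hc.continuousAt (hU.mem_nhds (hdU rfl))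
    have h2 : ContinuousAt (fun p : Set.Icc a b × Set.Icc a b => (γ p.1, γ p.2)) (s, s) :=
      ((hg.comp continuous_fst).prodMk (hg.comp continuous_snd)).continuousAt
    have h3 : ContinuousAt (fun p : Set.Icc a b × Set.Icc a b => L.tau (γ p.1) (γ p.2)) (s, s) :=
      ContinuousAt.comp (g := fun p : X × X => L.tau p.1 p.2)
        (f := fun p : Set.Icc a b × Set.Icc a b => (γ p.1, γ p.2)) (x := (s, s)) h1 h2
    have h4 : L.tau (γ s) (γ s) < ε := by rw [h_chron]; exact hε
    exact h3.eventually_lt_const h4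
  obtain ⟨δ, hδ, h⟩ := Metric.mem_uniformity_dist.1 key
  exact ⟨δ, hδ, fun s hs t ht hd => h (a := ⟨s, hs⟩) (b := ⟨t, ht⟩) hd⟩

theorem aux_len {X : Type*} [MetricSpace X] (L : LorentzianPreLengthSpace X)
    (γ : ℝ → X) (a b : ℝ) (N : ℕ) (t : Fin (N + 1) → ℝ) (ht : StrictMono t) (h0 : t 0 = a)
    (h1 : t (Fin.last N) = b) :
    L.tauLength γ a b ≤ ∑ i : Fin N, L.tau (γ (t i.castSucc)) (γ (t i.succ)) := by
  unfold LorentzianPreLengthSpace.tauLength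
  exact iInf_le_of_le N (iInf_le_of_le t (iInf_le_of_le ht (iInf_le_of_le h0 (iInf_le _ h1))))

/-- **Geodesic implies τ-midpoints.**
Let `X` be a chronological Lorentzian pre-length space with `τ` continuous on a
neighbourhood of the diagonal. If every timelike related pair is joined by a distance
realizer, then `X` has τ-midpoints. -/
theorem geodesic_implies_tau_midpoints
    {X : Type*} [MetricSpace X] (L : LorentzianPreLengthSpace X)
    (h_chron : ∀ x : X, L.tau x x = 0)
    (h_cont : ∃ U : Set (X × X), IsOpen U ∧ Set.diagonal X ⊆ U ∧
      ContinuousOn (fun p : X × X => L.tau p.1 p.2) U)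
    (h_geo : ∀ x y : X, L.timelike x y →
      ∃ (γ : ℝ → X) (a b : ℝ), L.IsDistanceRealizer γ a b x y) :
    L.HasTauMidpoints := by
  intro x z hxz
  obtain ⟨γ, a, b, ⟨hab, hγ, -, hcaus⟩, rfl, rfl, hlen⟩ := h_geo x z hxz
  have hun := aux_unif L h_chron h_cont γ a b hγ
  have hlen' := aux_len L γ a b
  rw [hlen] at hlen'
  have hfin : L.tau (γ a) (γ b) ≠ ⊤ := by
    obtain ⟨δ, hδ, h⟩ := hun 1 one_pos
    obtain ⟨n, hn⟩ := exists_nat_gt ((b - a) / δ)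
    have hba : 0 < b - a := sub_pos.2 hab
    have hn0 : (0 : ℝ) < n := lt_trans (div_pos hba hδ) hn
    have hstep : (b - a) / n < δ := by
      rw [div_lt_iff₀ hδ] at hn
      rw [div_lt_iff₀ hn0]; linarith
    have hst : 0 < (b - a) / n := div_pos hba hn0
    have hmem : ∀ i : ℕ, i ≤ n → a + i * ((b - a) / n) ∈ Set.Icc a b := by
      intro i hi
      have h1 : (i : ℝ) ≤ n := by exact_mod_cast hi
      have h2 : (i : ℝ) * ((b - a) / n) ≤ n * ((b - a) / n) :=
        mul_le_mul_of_nonneg_right h1 hst.le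
      have h3 : (n : ℝ) * ((b - a) / n) = b - a := by field_simp
      exact ⟨by have : 0 ≤ (i : ℝ) * ((b - a) / n) := by positivity
                linarith, by linarith⟩
    have := hlen' n (fun i => a + (i : ℕ) * ((b - a) / n))
      (by
        intro i j hij
        have : ((i : ℕ) : ℝ) < ((j : ℕ) : ℝ) := by exact_mod_cast hij
        have := mul_lt_mul_of_pos_right this hst
        simpa using this)
      (by simp)
      (by simp only [Fin.val_last]; field_simp; ring)
    refine ne_top_of_le_ne_top ?_ this
    refine ENNReal.sum_ne_top.2 fun i _ => ?_
    refine ne_top_of_lt (h _ (hmem _ (by simp)) _ (hmem _ (by simp)) ?_)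
    rw [dist_comm, Real.dist_eq]
    simp only [Fin.val_succ, Fin.val_castSucc]
    push_cast
    have : a + ((i : ℕ) + 1 : ℝ) * ((b - a) / n) - (a + (i : ℕ) * ((b - a) / n))
      = (b - a) / n := by ring
    rw [this, abs_of_pos hst]
    exact hstep
  have hle : ∀ s t, a ≤ s → s ≤ t → t ≤ b → L.causal (γ s) (γ t) := by
    intro s t h1 h2 h3
    rcases h2.eq_or_lt with rfl | h2
    · exact L.causal_refl _
    · exact hcaus h1 h2 h3
  have hsplit : ∀ t ∈ Set.Icc a b,
      L.tau (γ a) (γ t) + L.tau (γ t) (γ b) = L.tau (γ a) (γ b) := by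
    intro t ht
    rcases ht.1.eq_or_lt with rfl | h1
    · simp [h_chron]
    rcases ht.2.eq_or_lt with rfl | h2
    · simp [h_chron]
    refine le_antisymm (L.tau_rev_triangle (hle _ _ le_rfl ht.1 ht.2) (hle _ _ ht.1 ht.2 le_rfl)) ?_
    have := hlen' 2 ![a, t, b] (by
      rw [Fin.strictMono_iff_lt_succ]; intro i; fin_cases i <;> simp [h1, h2]) rfl rfl
    simpa [Fin.sum_univ_succ] using this
  have hadd : ∀ s t, a ≤ s → s ≤ t → t ≤ b →
      L.tau (γ a) (γ t) = L.tau (γ a) (γ s) + L.tau (γ s) (γ t) := by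
    intro s t h1 h2 h3
    refine le_antisymm ?_ (L.tau_rev_triangle (hle _ _ le_rfl h1 (h2.trans h3)) (hle _ _ h1 h2 h3))
    rcases h1.eq_or_lt with rfl | h1
    · simp [h_chron]
    rcases h2.eq_or_lt with rfl | h2
    · simp [h_chron]
    rcases h3.eq_or_lt with rfl | h3
    · exact (hsplit s ⟨h1.le, h2.le⟩).ge
    have h4 := hlen' 3 ![a, s, t, b] (by
      rw [Fin.strictMono_iff_lt_succ]; intro i; fin_cases i <;> simp [h1, h2, h3]) rfl rfl
    have h5 := hsplit t ⟨(h1.trans h2).le, h3.le⟩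
    have h6 : L.tau (γ t) (γ b) ≠ ⊤ :=
      ne_top_of_le_ne_top hfin (h5 ▸ le_add_self)
    rw [← ENNReal.add_le_add_iff_right h6, h5]
    simpa [Fin.sum_univ_succ, add_assoc] using h4
  have hfinS : ∀ t ∈ Set.Icc a b, L.tau (γ a) (γ t) ≠ ⊤ := fun t ht =>
    ne_top_of_le_ne_top hfin (hsplit t ht ▸ le_self_add)
  have hcontF : ContinuousOn (fun t => (L.tau (γ a) (γ t)).toReal) (Set.Icc a b) := by
    rw [Metric.continuousOn_iff]
    intro t ht ε hε
    obtain ⟨δ, hδ, h⟩ := hun (ENNReal.ofReal ε) (by simpa using hε)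
    have main : ∀ s ∈ Set.Icc a b, ∀ t ∈ Set.Icc a b, s ≤ t → dist s t < δ →
        dist (L.tau (γ a) (γ s)).toReal (L.tau (γ a) (γ t)).toReal < ε := by
      intro s hs t ht hst hd
      have h1 := h s hs t ht hd
      have h2 : L.tau (γ s) (γ t) ≠ ⊤ := ne_top_of_lt h1
      rw [hadd s t hs.1 hst ht.2, ENNReal.toReal_add (hfinS s hs) h2, Real.dist_eq]
      have h3 : (L.tau (γ s) (γ t)).toReal < ε := (ENNReal.lt_ofReal_iff_toReal_lt h2).1 h1
      rw [sub_add_cancel_left, abs_neg, abs_of_nonneg ENNReal.toReal_nonneg]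
      exact h3
    refine ⟨δ, hδ, fun s hs hd => ?_⟩
    rcases le_total s t with hst | hst
    · exact main s hs t ht hst hd
    · rw [dist_comm] at hd ⊢
      exact main t ht s hs hst hd
  have hivt := intermediate_value_Icc hab.le hcontF
  simp only [h_chron, ENNReal.toReal_zero] at hivt
  have hT : 0 ≤ (L.tau (γ a) (γ b)).toReal := ENNReal.toReal_nonneg
  obtain ⟨t, ht, hft⟩ := hivt
    (show (L.tau (γ a) (γ b)).toReal / 2 ∈ Set.Icc 0 _ from ⟨by linarith, by linarith⟩)
  have e1 : L.tau (γ a) (γ t) = L.tau (γ a) (γ b) / 2 := by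
    rw [← ENNReal.toReal_eq_toReal_iff' (hfinS t ht) (ENNReal.div_ne_top hfin (by simp))]
    simpa using hft
  refine ⟨γ t, e1, ?_⟩
  have h5 := hsplit t ht
  have h6 : L.tau (γ a) (γ b) / 2 ≠ ⊤ := ENNReal.div_ne_top hfin (by simp)
  rw [e1] at h5
  nth_rewrite 2 [← ENNReal.add_halves (L.tau (γ a) (γ b))] at h5
  exact (ENNReal.add_right_inj h6).1 h5
end

section
/- Let (X, d) be a metric space, let c ∈ (0, 1/2], M ≥ 0, and set α = −log₂(1−c). Let γ be a map from the dyadic rationals in [0,1] to X such that d(γ(k/2ⁿ), γ((k+1)/2ⁿ)) ≤ (1−c)ⁿ·M for every n ∈ ℕ and every integer 0 ≤ k < 2ⁿ. Then γ is α-Hölder with constant 2M/c, i.e., d(γ(s), γ(t)) ≤ (2M/c)·|s − t|^α for all dyadic rationals s, t ∈ [0,1]. -/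
/-- `r` is a dyadic rational in `[0,1]`, i.e. of the form `k / 2^n` with `0 ≤ k ≤ 2^n`. -/
def IsDyadic01 (r : ℝ) : Prop := ∃ (n k : ℕ), k ≤ 2 ^ n ∧ r = (k : ℝ) / 2 ^ n

/-- Chaining estimate at a fixed common denominator, by induction on the level. -/
theorem dyadic_chain {X : Type*} [MetricSpace X] (c M : ℝ)
    (hc0 : 0 < c) (hc2 : c ≤ 1 / 2) (hM : 0 ≤ M) (G : ℕ → ℕ → X)
    (hG : ∀ N a, G (N + 1) (2 * a) = G N a)
    (h : ∀ n k : ℕ, k < 2 ^ n → dist (G n k) (G n (k + 1)) ≤ (1 - c) ^ n * M) (N : ℕ) :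
    ∀ a b : ℕ, a < b → b ≤ 2 ^ N → ∃ n : ℕ, 2 ^ N ≤ 2 ^ n * (b - a) ∧
      dist (G N a) (G N b) * c ≤ 2 * M * ((1 - c) ^ n - (1 - c) ^ (N + 1)) := by
  induction N with
  | zero =>
    intro a b hab hb
    have hb' : b = 1 := by simp at hb; omega
    have ha' : a = 0 := by omega
    subst hb' ha'
    refine ⟨0, by simp, ?_⟩
    have := h 0 0 (by simp)
    simp only [pow_zero, one_mul, zero_add, pow_one] at this ⊢
    nlinarith
  | succ N ih =>
    intro a b hab hb
    have hq : 0 ≤ (1 - c) ^ (N + 1) * M := mul_nonneg (pow_nonneg (by linarith) _) hM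
    have h2 : (1 - c) ^ (N + 1 + 1) = (1 - c) ^ (N + 1) * (1 - c) := pow_succ _ _
    by_cases hlt : (a + 1) / 2 < b / 2
    · obtain ⟨n, hn, hd⟩ := ih ((a + 1) / 2) (b / 2) hlt (by rw [pow_succ] at hb; omega)
      refine ⟨n, ?_, ?_⟩
      · calc 2 ^ (N + 1) = 2 ^ N * 2 := pow_succ _ _
          _ ≤ 2 ^ n * (b / 2 - (a + 1) / 2) * 2 := Nat.mul_le_mul_right _ hn
          _ = 2 ^ n * ((b / 2 - (a + 1) / 2) * 2) := by ring
          _ ≤ _ := Nat.mul_le_mul_left _ (by omega)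
      · have h3 : dist (G (N + 1) a) (G N ((a + 1) / 2)) ≤ (1 - c) ^ (N + 1) * M := by
          rw [← hG N]
          rcases Nat.even_or_odd' a with ⟨i, hi | hi⟩
          · rw [show 2 * ((a + 1) / 2) = a by omega, dist_self]; exact hq
          · rw [show 2 * ((a + 1) / 2) = a + 1 by omega]; exact h _ _ (by omega)
        have h4 : dist (G N (b / 2)) (G (N + 1) b) ≤ (1 - c) ^ (N + 1) * M := by
          rw [← hG N]
          rcases Nat.even_or_odd' b with ⟨i, hi | hi⟩
          · rw [show 2 * (b / 2) = b by omega, dist_self]; exact hq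
          · have := h (N + 1) (2 * (b / 2)) (by omega)
            rwa [show 2 * (b / 2) + 1 = b by omega] at this
        have h5 := dist_triangle4 (G (N + 1) a) (G N ((a + 1) / 2)) (G N (b / 2)) (G (N + 1) b)
        rw [h2]
        have h6 := mul_le_mul_of_nonneg_right (h5.trans (add_le_add (add_le_add_left h3 _) h4)) hc0.le
        nlinarith
    · refine ⟨N + 1, Nat.le_mul_of_pos_right _ (by omega), ?_⟩
      have key : dist (G (N + 1) a) (G (N + 1) b) ≤ 2 * ((1 - c) ^ (N + 1) * M) := by
        have h3 := h (N + 1) a (by omega)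
        obtain hb1 | hb2 : b = a + 1 ∨ b = a + 2 := by omega
        · subst hb1; linarith
        · subst hb2
          have h4 := h (N + 1) (a + 1) (by omega)
          have h5 := dist_triangle (G (N + 1) a) (G (N + 1) (a + 1)) (G (N + 1) (a + 2))
          linarith
      have h6 := mul_le_mul_of_nonneg_right key hc0.le
      rw [h2]
      nlinarith

/-- **Dyadic Hölder estimate.**
Let `(X,d)` be a metric space, `c ∈ (0, 1/2]`, `M ≥ 0` and `α = -log₂ (1-c)`. If a map
`γ` defined on the dyadic rationals in `[0,1]` satisfies
`d(γ(k/2ⁿ), γ((k+1)/2ⁿ)) ≤ (1-c)ⁿ·M` for all `n` and `0 ≤ k < 2ⁿ`, then `γ` is α-Hölder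
with constant `2M/c` on the dyadic rationals. -/
theorem dyadic_midpoint_bound_implies_holder
    {X : Type*} [MetricSpace X] (c M : ℝ)
    (hc0 : 0 < c) (hc2 : c ≤ 1 / 2) (hM : 0 ≤ M) (γ : ℝ → X)
    (h : ∀ (n k : ℕ), k < 2 ^ n →
      dist (γ ((k : ℝ) / 2 ^ n)) (γ (((k : ℝ) + 1) / 2 ^ n)) ≤ (1 - c) ^ n * M) :
    ∀ s t : ℝ, IsDyadic01 s → IsDyadic01 t →
      dist (γ s) (γ t) ≤ 2 * M / c * |s - t| ^ (-Real.logb 2 (1 - c)) := by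
  have main : ∀ N a b : ℕ, a < b → b ≤ 2 ^ N →
      dist (γ ((a : ℝ) / 2 ^ N)) (γ ((b : ℝ) / 2 ^ N)) ≤
        2 * M / c * (((b : ℝ) - a) / 2 ^ N) ^ (-Real.logb 2 (1 - c)) := by
    intro N a b hab hb
    obtain ⟨n, hn, hd⟩ := dyadic_chain c M hc0 hc2 hM (fun N a => γ ((a : ℝ) / 2 ^ N))
      (fun N a => by
        have : ((2 * a : ℕ) : ℝ) / 2 ^ (N + 1) = (a : ℝ) / 2 ^ N := by
          push_cast; rw [pow_succ]; field_simp
        simp only [this])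
      (fun n k hk => by simpa using h n k hk) N a b hab hb
    have hq : 0 < 1 - c := by linarith
    have hα : 0 ≤ -Real.logb 2 (1 - c) := by
      have := Real.logb_nonpos (b := 2) (by norm_num) hq.le (by linarith)
      linarith
    have hn' : (2 : ℝ) ^ N ≤ 2 ^ n * ((b : ℝ) - a) := by
      rw [← Nat.cast_sub hab.le]; exact_mod_cast hn
    have h1 : ((2 : ℝ) ^ n)⁻¹ ≤ ((b : ℝ) - a) / 2 ^ N := by
      rw [inv_eq_one_div, div_le_div_iff₀ (by positivity) (by positivity)]; linarith
    have h2 : (1 - c) ^ n = (((2 : ℝ) ^ n)⁻¹) ^ (-Real.logb 2 (1 - c)) := by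
      rw [Real.rpow_neg (by positivity), Real.inv_rpow (by positivity), inv_inv,
        ← Real.rpow_natCast 2 n, ← Real.rpow_mul (by norm_num), mul_comm,
        Real.rpow_mul (by norm_num), Real.rpow_logb (by norm_num) (by norm_num) hq,
        Real.rpow_natCast]
    have h3 := Real.rpow_le_rpow (by positivity) h1 hα
    rw [← h2] at h3
    have h4 : 0 ≤ (1 - c) ^ (N + 1) := by positivity
    rw [div_mul_eq_mul_div, le_div_iff₀ hc0]
    refine hd.trans (mul_le_mul_of_nonneg_left (by linarith) (by linarith))
  rintro s t ⟨n, k, hk, rfl⟩ ⟨m, l, hl, rfl⟩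
  have e1 : (k : ℝ) / 2 ^ n = ((k * 2 ^ m : ℕ) : ℝ) / 2 ^ (n + m) := by
    push_cast; rw [pow_add]; field_simp
  have e2 : (l : ℝ) / 2 ^ m = ((l * 2 ^ n : ℕ) : ℝ) / 2 ^ (n + m) := by
    push_cast; rw [pow_add]; field_simp
  have b1 : k * 2 ^ m ≤ 2 ^ (n + m) := by rw [pow_add]; exact Nat.mul_le_mul_right _ hk
  have b2 : l * 2 ^ n ≤ 2 ^ (n + m) := by
    rw [pow_add, mul_comm (2 ^ n)]; exact Nat.mul_le_mul_right _ hl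
  rw [e1, e2]
  generalize k * 2 ^ m = a at *
  generalize l * 2 ^ n = b at *
  rw [← sub_div, abs_div, abs_of_pos (show (0 : ℝ) < 2 ^ (n + m) by positivity)]
  rcases lt_trichotomy a b with hab | hab | hab
  · have hab' : (a : ℝ) < b := by exact_mod_cast hab
    rw [abs_sub_comm, abs_of_pos (by linarith)]
    exact main _ _ _ hab b2
  · subst hab
    rw [dist_self]
    positivity
  · have hab' : (b : ℝ) < a := by exact_mod_cast hab
    rw [abs_of_pos (by linarith), dist_comm]
    exact main _ _ _ hab b1
end

section
/- Let c ∈ (0, 1/2] and let f be a real-valued function on the dyadic rationals in [0,1] with f(0) ≤ f(1), such that for every n ∈ ℕ and every integer 0 ≤ k < 2ⁿ one has c·(f((k+1)/2ⁿ) − f(k/2ⁿ)) ≤ f((2k+1)/2ⁿ⁺¹) − f(k/2ⁿ) ≤ (1−c)·(f((k+1)/2ⁿ) − f(k/2ⁿ)). Then for every n ∈ ℕ and every integer 0 ≤ k < 2ⁿ, 0 ≤ f((k+1)/2ⁿ) − f(k/2ⁿ) ≤ (1−c)ⁿ·(f(1) − f(0)). -/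
/-- **Geometric decay of dyadic increments.**
Let `c ∈ (0, 1/2]` and `f` a real function on the dyadic rationals in `[0,1]` with
`f 0 ≤ f 1` such that the value at each dyadic midpoint `(2k+1)/2ⁿ⁺¹` lies in the
`c`-controlled convex range between the values at `k/2ⁿ` and `(k+1)/2ⁿ`. Then each
successive dyadic increment at level `n` lies in `[0, (1-c)ⁿ·(f 1 − f 0)]`. -/
theorem dyadic_increment_geometric_decay
    (c : ℝ) (hc0 : 0 < c) (hc2 : c ≤ 1 / 2)
    (f : ℝ → ℝ) (h01 : f 0 ≤ f 1)
    (h : ∀ (n k : ℕ), k < 2 ^ n →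
      c * (f (((k : ℝ) + 1) / 2 ^ n) - f ((k : ℝ) / 2 ^ n)) ≤
          f ((2 * (k : ℝ) + 1) / 2 ^ (n + 1)) - f ((k : ℝ) / 2 ^ n) ∧
        f ((2 * (k : ℝ) + 1) / 2 ^ (n + 1)) - f ((k : ℝ) / 2 ^ n) ≤
          (1 - c) * (f (((k : ℝ) + 1) / 2 ^ n) - f ((k : ℝ) / 2 ^ n))) :
    ∀ (n k : ℕ), k < 2 ^ n →
      0 ≤ f (((k : ℝ) + 1) / 2 ^ n) - f ((k : ℝ) / 2 ^ n) ∧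
        f (((k : ℝ) + 1) / 2 ^ n) - f ((k : ℝ) / 2 ^ n) ≤ (1 - c) ^ n * (f 1 - f 0) := by
  intro n
  induction n with
  | zero =>
    intro k hk
    have hk0 : k = 0 := by simpa using hk
    subst hk0
    simp [h01]
  | succ n ih =>
    intro k hk
    obtain ⟨j, hj⟩ : ∃ j, k = 2 * j ∨ k = 2 * j + 1 := ⟨k / 2, by omega⟩
    have hjn : j < 2 ^ n := by
      rw [pow_succ] at hk
      omega
    obtain ⟨i1, i2⟩ := ih j hjn
    obtain ⟨h1, h2⟩ := h n j hjn
    have hp : (2 : ℝ) ^ n ≠ 0 := by positivity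
    have e1 : (2 * (j : ℝ)) / 2 ^ (n + 1) = (j : ℝ) / 2 ^ n := by
      rw [pow_succ]; field_simp
    have e2 : (2 * (j : ℝ) + 1 + 1) / 2 ^ (n + 1) = ((j : ℝ) + 1) / 2 ^ n := by
      rw [pow_succ]; field_simp; ring
    have hm := mul_le_mul_of_nonneg_left i2 (show 0 ≤ 1 - c by linarith)
    have hq : (1 - c) ^ (n + 1) * (f 1 - f 0) = (1 - c) * ((1 - c) ^ n * (f 1 - f 0)) := by
      ring
    have hc := mul_nonneg hc0.le i1
    rw [hq]
    rcases hj with rfl | rfl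
    · push_cast
      rw [e1]
      constructor <;> linarith
    · push_cast
      rw [e2]
      constructor <;> linarith
end

section
/- Let σ be a function assigning to each pair of dyadic rationals s < t in [0,1] a value σ(s,t) ∈ [0, ∞), such that σ(r,t) ≥ σ(r,s) + σ(s,t) for all dyadic rationals r < s < t in [0,1], and such that for every n ∈ ℕ and every integer 0 ≤ k < 2ⁿ one has σ(k/2ⁿ, (2k+1)/2ⁿ⁺¹) = σ((2k+1)/2ⁿ⁺¹, (k+1)/2ⁿ) = (1/2)·σ(k/2ⁿ, (k+1)/2ⁿ). Then σ(s,t) = (t − s)·σ(0,1) for all dyadic rationals s < t in [0,1]. -/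
/-- **Exact bisection implies linearity on dyadic rationals.**
Let `σ` assign to each pair of dyadic rationals `s < t` in `[0,1]` a value in `[0,∞)`,
satisfying the reverse (super-additive) triangle inequality, and suppose each dyadic
midpoint exactly bisects the σ-value of its parent interval. Then
`σ(s,t) = (t − s)·σ(0,1)` for all dyadic rationals `s < t` in `[0,1]`. -/
theorem superadditive_bisection_linear_on_dyadics
    (σ : ℝ → ℝ → ℝ)
    (hnn : ∀ s t : ℝ, IsDyadic01 s → IsDyadic01 t → s < t → 0 ≤ σ s t)
    (hsuper : ∀ r s t : ℝ, IsDyadic01 r → IsDyadic01 s → IsDyadic01 t →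
      r < s → s < t → σ r s + σ s t ≤ σ r t)
    (hmid : ∀ (n k : ℕ), k < 2 ^ n →
      σ ((k : ℝ) / 2 ^ n) ((2 * (k : ℝ) + 1) / 2 ^ (n + 1)) =
          σ ((k : ℝ) / 2 ^ n) (((k : ℝ) + 1) / 2 ^ n) / 2 ∧
        σ ((2 * (k : ℝ) + 1) / 2 ^ (n + 1)) (((k : ℝ) + 1) / 2 ^ n) =
          σ ((k : ℝ) / 2 ^ n) (((k : ℝ) + 1) / 2 ^ n) / 2) :
    ∀ s t : ℝ, IsDyadic01 s → IsDyadic01 t → s < t → σ s t = (t - s) * σ 0 1 := by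
  have hd : ∀ n k : ℕ, k ≤ 2 ^ n → IsDyadic01 ((k : ℝ) / 2 ^ n) := fun n k h => ⟨n, k, h, rfl⟩
  have hunit : ∀ n k : ℕ, k < 2 ^ n →
      σ ((k : ℝ) / 2 ^ n) (((k : ℝ) + 1) / 2 ^ n) = σ 0 1 / 2 ^ n := by
    intro n
    induction n with
    | zero =>
      intro k hk
      have : k = 0 := by simpa using hk
      subst this
      simp
    | succ n ih =>
      intro k hk
      have hp : (2 : ℝ) ^ n ≠ 0 := by positivity
      rw [pow_succ] at hk
      rcases Nat.even_or_odd' k with ⟨j, rfl | rfl⟩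
      · have hj : j < 2 ^ n := by omega
        have h := (hmid n j hj).1
        rw [ih j hj] at h
        have e : ((2 * j : ℕ) : ℝ) / 2 ^ (n + 1) = (j : ℝ) / 2 ^ n := by
          push_cast; rw [pow_succ]; field_simp
        rw [e]
        push_cast
        rw [h, pow_succ]; field_simp
      · have hj : j < 2 ^ n := by omega
        have h := (hmid n j hj).2
        rw [ih j hj] at h
        have e : (((2 * j + 1 : ℕ) : ℝ) + 1) / 2 ^ (n + 1) = ((j : ℝ) + 1) / 2 ^ n := by
          push_cast; rw [pow_succ]; field_simp; ring
        rw [e]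
        push_cast
        rw [h, pow_succ]; field_simp
  have hlow : ∀ n a d : ℕ, a + (d + 1) ≤ 2 ^ n →
      ((d : ℝ) + 1) / 2 ^ n * σ 0 1 ≤ σ ((a : ℝ) / 2 ^ n) (((a + (d + 1) : ℕ) : ℝ) / 2 ^ n) := by
    intro n a d
    induction d with
    | zero =>
      intro h
      have := hunit n a (by omega)
      push_cast
      rw [zero_add, this]
      apply le_of_eq; ring
    | succ d ih =>
      intro h
      have h1 := ih (by omega)
      have h2 := hunit n (a + (d + 1)) (by omega)
      have h3 := hsuper ((a : ℝ) / 2 ^ n) (((a + (d + 1) : ℕ) : ℝ) / 2 ^ n)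
        (((a + (d + 1 + 1) : ℕ) : ℝ) / 2 ^ n) (hd _ _ (by omega)) (hd _ _ (by omega))
        (hd _ _ h)
        (by apply div_lt_div_of_pos_right _ (by positivity); exact_mod_cast (by omega))
        (by apply div_lt_div_of_pos_right _ (by positivity); exact_mod_cast (by omega))
      have e : (((a + (d + 1) : ℕ) : ℝ) + 1) = ((a + (d + 1 + 1) : ℕ) : ℝ) := by
        push_cast; ring
      rw [e] at h2
      rw [h2] at h3
      refine le_trans (le_of_eq ?_) (le_trans (add_le_add_left h1 _) h3)
      push_cast; ring
  have hlow' : ∀ n a b : ℕ, a < b → b ≤ 2 ^ n →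
      ((b : ℝ) / 2 ^ n - (a : ℝ) / 2 ^ n) * σ 0 1 ≤ σ ((a : ℝ) / 2 ^ n) ((b : ℝ) / 2 ^ n) := by
    intro n a b hab hb
    obtain ⟨d, rfl⟩ := Nat.exists_eq_add_of_lt hab
    refine le_trans (le_of_eq ?_) (hlow n a d hb)
    push_cast; ring
  have hL : ∀ s t : ℝ, IsDyadic01 s → IsDyadic01 t → s < t → (t - s) * σ 0 1 ≤ σ s t := by
    rintro s t ⟨n, a, ha, rfl⟩ ⟨m, b, hb, rfl⟩ hst
    have e1 : (a : ℝ) / 2 ^ n = ((a * 2 ^ m : ℕ) : ℝ) / 2 ^ (n + m) := by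
      push_cast; rw [pow_add]; field_simp
    have e2 : (b : ℝ) / 2 ^ m = ((b * 2 ^ n : ℕ) : ℝ) / 2 ^ (n + m) := by
      push_cast; rw [pow_add]; field_simp
    rw [e1, e2] at hst ⊢
    apply hlow'
    · have := (div_lt_div_iff_of_pos_right (by positivity)).1 hst
      exact_mod_cast this
    · rw [pow_add, mul_comm]; exact Nat.mul_le_mul_left _ hb
  have h01 : ∀ s, IsDyadic01 s → 0 ≤ s ∧ s ≤ 1 := by
    rintro s ⟨n, a, ha, rfl⟩
    refine ⟨by positivity, ?_⟩
    rw [div_le_one (by positivity)]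
    exact_mod_cast ha
  have d0 : IsDyadic01 0 := ⟨0, 0, by simp, by simp⟩
  have d1 : IsDyadic01 1 := ⟨0, 1, by simp, by simp⟩
  have hU : ∀ t, IsDyadic01 t → 0 < t → σ 0 t ≤ t * σ 0 1 := by
    intro t ht h0
    rcases (h01 t ht).2.eq_or_lt with rfl | h1
    · simp
    · have := hsuper 0 t 1 d0 ht d1 h0 h1
      have := hL t 1 ht d1 h1
      linarith
  intro s t hs ht hst
  apply le_antisymm _ (hL s t hs ht hst)
  have hT := hU t ht (lt_of_le_of_lt (h01 s hs).1 hst)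
  rcases (h01 s hs).1.eq_or_lt with rfl | h0
  · simpa using hT
  · have := hsuper 0 s t d0 hs ht h0 hst
    have := hL 0 s d0 hs h0
    linarith
end

section
/- Let X be a topological space and let R be a transitive relation on X such that every point of X has a neighbourhood U with the property that whenever p_n → p and q_n → q with p_n, q_n ∈ U for all n, p, q ∈ cl(U), and R(p_n, q_n) for all n, then R(p, q). Let γ : [0,1] → X be a continuous map such that R(γ(s), γ(t)) for all dyadic rationals s < t in [0,1]. Then R(γ(s), γ(t)) for all reals 0 ≤ s < t ≤ 1. -/
lemma exists_dyadic_between {a b : ℝ} (ha : 0 ≤ a) (hab : a < b) (hb : b ≤ 1) :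
    ∃ d, IsDyadic01 d ∧ a < d ∧ d < b := by
  obtain ⟨n, hn⟩ := exists_pow_lt_of_lt_one (sub_pos.2 hab) (by norm_num : (1 / 2 : ℝ) < 1)
  have hp : (0 : ℝ) < 2 ^ n := by positivity
  have h1 : (1 : ℝ) < (b - a) * 2 ^ n := by
    rw [one_div, inv_pow, inv_lt_iff_one_lt_mul₀ hp] at hn
    linarith
  have h2 := Nat.lt_floor_add_one (a * 2 ^ n)
  have h3 := Nat.floor_le (mul_nonneg ha hp.le)
  have h4 : ((⌊a * 2 ^ n⌋₊ + 1 : ℕ) : ℝ) < b * 2 ^ n := by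
    push_cast
    linarith
  refine ⟨((⌊a * 2 ^ n⌋₊ + 1 : ℕ) : ℝ) / 2 ^ n, ⟨n, _, ?_, rfl⟩, ?_, ?_⟩
  · have h5 : ((⌊a * 2 ^ n⌋₊ + 1 : ℕ) : ℝ) ≤ ((2 ^ n : ℕ) : ℝ) := by
      rw [Nat.cast_pow, Nat.cast_ofNat]
      nlinarith
    exact_mod_cast h5
  · rw [lt_div_iff₀ hp]
    push_cast
    exact h2
  · rw [div_lt_iff₀ hp]
    exact h4

/-- A sequence in `[0,1]` converging to `s` stays convergent after applying `γ`. -/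
lemma tendsto_comp_of_close {X : Type*} [TopologicalSpace X] {γ : ℝ → X}
    (hγ : ContinuousOn γ (Set.Icc 0 1)) {s : ℝ} (hs : s ∈ Set.Icc (0 : ℝ) 1) {c : ℝ}
    {r : ℕ → ℝ} (hr : ∀ n, r n ∈ Set.Icc (0 : ℝ) 1)
    (h : ∀ n : ℕ, |r n - s| ≤ c * (1 / ((n : ℝ) + 1))) :
    Filter.Tendsto (fun n => γ (r n)) Filter.atTop (nhds (γ s)) := by
  have h0 : Filter.Tendsto (fun n : ℕ => c * (1 / ((n : ℝ) + 1))) Filter.atTop (nhds 0) := by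
    simpa using (tendsto_one_div_add_atTop_nhds_zero_nat (𝕜 := ℝ)).const_mul c
  have h1 : Filter.Tendsto r Filter.atTop (nhds s) := by
    rw [tendsto_iff_dist_tendsto_zero]
    exact squeeze_zero (fun _ => dist_nonneg) (fun n => by rw [Real.dist_eq]; exact h n) h0
  exact (hγ s hs).tendsto.comp
    (tendsto_nhdsWithin_iff.2 ⟨h1, Filter.Eventually.of_forall hr⟩)

lemma exists_close {X : Type*} [TopologicalSpace X] {γ : ℝ → X}
    (hγ : ContinuousOn γ (Set.Icc 0 1)) {s : ℝ} (hs : s ∈ Set.Icc (0 : ℝ) 1) {U : Set X}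
    (hU : U ∈ nhds (γ s)) :
    ∃ δ > 0, ∀ r ∈ Set.Icc (0 : ℝ) 1, |r - s| < δ → γ r ∈ U := by
  obtain ⟨δ, hδ, h⟩ := Metric.mem_nhdsWithin_iff.1 (hγ s hs hU)
  exact ⟨δ, hδ, fun r hr hrs => h ⟨by rwa [Metric.mem_ball, Real.dist_eq], hr⟩⟩

/-- **Causality on dyadic parameters extends to all parameters.**
Let `X` be a topological space and `R` a transitive relation on `X` that is locally
closed: every point has a neighbourhood `U` such that `R` passes to limits of sequences
in `U` with limits in `cl U`. If `γ : [0,1] → X` is continuous and `R (γ s) (γ t)` holds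
for all dyadic rationals `s < t` in `[0,1]`, then `R (γ s) (γ t)` holds for all reals
`0 ≤ s < t ≤ 1`. -/
theorem rel_on_dyadics_extends
    {X : Type*} [TopologicalSpace X]
    (R : X → X → Prop) (hR : Transitive R)
    (hclosed : ∀ x : X, ∃ U ∈ nhds x, ∀ (p q : X) (pn qn : ℕ → X),
      (∀ n, pn n ∈ U) → (∀ n, qn n ∈ U) → p ∈ closure U → q ∈ closure U →
      Filter.Tendsto pn Filter.atTop (nhds p) → Filter.Tendsto qn Filter.atTop (nhds q) →
      (∀ n, R (pn n) (qn n)) → R p q)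
    (γ : ℝ → X) (hγ : ContinuousOn γ (Set.Icc 0 1))
    (hdy : ∀ s t : ℝ, IsDyadic01 s → IsDyadic01 t → s < t → R (γ s) (γ t)) :
    ∀ s t : ℝ, 0 ≤ s → s < t → t ≤ 1 → R (γ s) (γ t) := by
  intro s t hs hst ht
  have hsI : s ∈ Set.Icc (0 : ℝ) 1 := ⟨hs, by linarith⟩
  have htI : t ∈ Set.Icc (0 : ℝ) 1 := ⟨by linarith, ht⟩
  have hfrac : ∀ n : ℕ, 0 < 1 / ((n : ℝ) + 1) ∧ 1 / ((n : ℝ) + 1) ≤ 1 := fun n => by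
    have hn : (0 : ℝ) ≤ n := Nat.cast_nonneg n
    refine ⟨by positivity, ?_⟩
    rw [div_le_one (by positivity)]
    linarith
  -- step 1: a dyadic right of `s`
  obtain ⟨d, hd, hsd, hdt, h1⟩ : ∃ d, IsDyadic01 d ∧ s < d ∧ d < t ∧ R (γ s) (γ d) := by
    obtain ⟨U, hU, hcl⟩ := hclosed (γ s)
    obtain ⟨δ, hδ, hin⟩ := exists_close hγ hsI hU
    obtain ⟨d, hd, hsd, hdm⟩ := exists_dyadic_between hs
      (lt_min hst (by linarith : s < s + δ)) ((min_le_left _ _).trans ht)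
    obtain ⟨hdt, hdδ⟩ := lt_min_iff.1 hdm
    have hex : ∀ n : ℕ, ∃ r, IsDyadic01 r ∧ s < r ∧ r < s + (d - s) * (1 / ((n : ℝ) + 1)) :=
      fun n => exists_dyadic_between hs
        (by have := mul_pos (sub_pos.2 hsd) (hfrac n).1; linarith)
        (by have := mul_le_of_le_one_right (sub_pos.2 hsd).le (hfrac n).2; linarith)
    choose r hrd hsr hrs using hex
    have hrd' : ∀ n, r n < d := fun n => by
      have := mul_le_of_le_one_right (sub_pos.2 hsd).le (hfrac n).2
      linarith [hrs n]
    have hrI : ∀ n, r n ∈ Set.Icc (0 : ℝ) 1 := fun n =>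
      ⟨by linarith [hsr n], by linarith [hrd' n]⟩
    have hdU : γ d ∈ U := hin d ⟨by linarith, by linarith⟩ (by rw [abs_lt]; constructor <;> linarith)
    refine ⟨d, hd, hsd, hdt, hcl (γ s) (γ d) (fun n => γ (r n)) (fun _ => γ d)
      (fun n => hin _ (hrI n) ?_) (fun _ => hdU) (subset_closure (mem_of_mem_nhds hU))
      (subset_closure hdU) (tendsto_comp_of_close hγ hsI (c := d - s) hrI fun n => ?_)
      tendsto_const_nhds (fun n => hdy _ _ (hrd n) hd (hrd' n))⟩
    · rw [abs_lt]
      constructor <;> linarith [hsr n, hrd' n]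
    · rw [abs_of_pos (sub_pos.2 (hsr n))]
      linarith [hrs n]
  -- step 2: a dyadic left of `t`, right of `d`
  obtain ⟨e, he, hde, h2⟩ : ∃ e, IsDyadic01 e ∧ d < e ∧ R (γ e) (γ t) := by
    obtain ⟨U, hU, hcl⟩ := hclosed (γ t)
    obtain ⟨δ, hδ, hin⟩ := exists_close hγ htI hU
    obtain ⟨e, he, hem, het⟩ := exists_dyadic_between
      (le_max_of_le_left (by linarith : 0 ≤ d))
      (max_lt hdt (by linarith : t - δ < t)) ht
    obtain ⟨hde, heδ⟩ := max_lt_iff.1 hem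
    have hex : ∀ n : ℕ, ∃ r, IsDyadic01 r ∧ t - (t - e) * (1 / ((n : ℝ) + 1)) < r ∧ r < t :=
      fun n => exists_dyadic_between
        (by have := mul_le_of_le_one_right (sub_pos.2 het).le (hfrac n).2; linarith)
        (by have := mul_pos (sub_pos.2 het) (hfrac n).1; linarith) ht
    choose r hrd hrs hrt using hex
    have hrd' : ∀ n, e < r n := fun n => by
      have := mul_le_of_le_one_right (sub_pos.2 het).le (hfrac n).2
      linarith [hrs n]
    have hrI : ∀ n, r n ∈ Set.Icc (0 : ℝ) 1 := fun n =>
      ⟨by linarith [hrd' n], by linarith [hrt n]⟩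
    have heU : γ e ∈ U := hin e ⟨by linarith, by linarith⟩ (by rw [abs_lt]; constructor <;> linarith)
    refine ⟨e, he, hde, hcl (γ e) (γ t) (fun _ => γ e) (fun n => γ (r n))
      (fun _ => heU) (fun n => hin _ (hrI n) ?_) (subset_closure heU)
      (subset_closure (mem_of_mem_nhds hU)) tendsto_const_nhds
      (tendsto_comp_of_close hγ htI (c := t - e) hrI fun n => ?_)
      (fun n => hdy _ _ he (hrd n) (hrd' n))⟩
    · rw [abs_lt]
      constructor <;> linarith [hrt n, hrd' n]
    · rw [abs_sub_comm, abs_of_pos (sub_pos.2 (hrt n))]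
      linarith [hrs n]
  exact hR h1 (hR (hdy d e hd he hde) h2)
end
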